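/- arXiv:1607.06573 — 6 statements merged into one kernel-verified Lean document; each statement's English description precedes it below -/
import Mathlib

section
/- Let ℓ > 3 be a prime. Then the number of ordered triples (X,Y,Z) ∈ ℤ³ with X² + Y² + Z² = 3ℓ² equals 8(ℓ + 1 − (−3/ℓ)), where (−3/ℓ) denotes the Legendre symbol of −3 modulo ℓ. -/
/-!
Encode a triple as a pure integral quaternion, so that `r₃(n)` counts the pure quaternions of norm
`n`. An isotropic vector `a` modulo `ℓ` (for the form `b² + c² + d²`) is annihilated by a
quaternion `x` of norm `ℓ`: Lagrange's descent, run inside the left ideal of all integral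
quaternions annihilating `a`, finds one. The map `w ↦ star x * w * x` identifies the sphere of
norm `n` with the vectors of norm `n ℓ²` incident to `a`. Double counting the incidences between
the `ℓ² - 1` nonzero isotropic vectors and the sphere of norm `n ℓ²` then gives
`(ℓ² - 1) r₃(n) = (ℓ - 1) (r₃(n ℓ²) - r₃(n)) + (ℓ - 1) ((1 + (-n/ℓ)) r₃(n) + ℓ r₃(n/ℓ²))`:
a vector that is nonzero modulo `ℓ` meets a single isotropic line, whereas `ℓ u` meets the
isotropic lines orthogonal to `u`, of which there are `1 + (-n/ℓ)` unless `u` vanishes modulo `ℓ`.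
For `n = 3` the last term disappears and `r₃(3) = 8`.
-/

open Quaternion

namespace ThreeSquares

section CommRing

variable {R S : Type*} [CommRing R] [CommRing S]

/-- The sphere `b² + c² + d² = n`, encoding triples `(b, c, d)` as pure quaternions
`bi + cj + dk`. -/
def pureSphere (n : R) : Set ℍ[R] :=
  {v | v.re = 0 ∧ normSq v = n}

/-- The nonzero isotropic vectors of the quadratic form `b² + c² + d²`, as pure quaternions. -/
def isotropicVectors (R : Type*) [CommRing R] : Set ℍ[R] :=
  pureSphere 0 \ {0}

instance [Finite R] : Finite ℍ[R] :=
  Finite.of_equiv _ (equivProd R).symm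

theorem star_eq_neg_of_re_eq_zero {v : ℍ[R]} (hv : v.re = 0) : star v = -v := by
  ext <;> simp [hv]

theorem mul_eq_zero_comm_of_re_eq_zero {u v : ℍ[R]} (hu : u.re = 0) (hv : v.re = 0) :
    u * v = 0 ↔ v * u = 0 := by
  rw [← star_eq_zero, star_mul, star_eq_neg_of_re_eq_zero hu, star_eq_neg_of_re_eq_zero hv,
    neg_mul_neg]

theorem mul_self_eq_zero_of_mem_pureSphere {a : ℍ[R]} (ha : a ∈ pureSphere 0) : a * a = 0 := by
  rw [← neg_eq_zero, ← mul_neg, ← star_eq_neg_of_re_eq_zero ha.1, self_mul_star, ha.2, coe_zero]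

theorem mul_mul_self (v z : ℍ[R]) :
    v * z * v = (2 * (z * v).re) • v - normSq v • star z := by
  have h : v * (z * v) + v * star (z * v) = (2 * (z * v).re) • v := by
    rw [← mul_add, self_add_star', ← coe_commutes, coe_mul_eq_smul]
  rw [star_mul, ← mul_assoc, ← mul_assoc, self_mul_star, coe_mul_eq_smul] at h
  exact eq_sub_of_add_eq h

theorem normSq_equivProd_symm (p q r s : R) :
    normSq ((equivProd R).symm (p, q, r, s)) = p ^ 2 + q ^ 2 + r ^ 2 + s ^ 2 :=
  normSq_def' _

theorem re_mul_comm (x y : ℍ[R]) : (x * y).re = (y * x).re := by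
  simp only [re_mul]
  ring

theorem re_mul_mul_star (x z : ℍ[R]) : (x * z * star x).re = normSq x * z.re := by
  rw [re_mul_comm, ← mul_assoc, star_mul_self, coe_mul_eq_smul, re_smul, smul_eq_mul]

/-- The ring homomorphism `ℍ[R] → ℍ[S]` acting on coordinates by `f`. -/
def mapQuaternion (f : R →+* S) : ℍ[R] →+* ℍ[S] where
  toFun x := (equivProd S).symm (f x.re, f x.imI, f x.imJ, f x.imK)
  map_one' := by ext <;> simp
  map_mul' x y := by ext <;> simp
  map_zero' := by ext <;> simp
  map_add' x y := by ext <;> simp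

theorem mapQuaternion_star (f : R →+* S) (x : ℍ[R]) :
    mapQuaternion f (star x) = star (mapQuaternion f x) := by
  ext <;> simp [mapQuaternion]

theorem normSq_mapQuaternion (f : R →+* S) (x : ℍ[R]) :
    normSq (mapQuaternion f x) = f (normSq x) := by
  simp [mapQuaternion, normSq_def']

theorem mapQuaternion_surjective {f : R →+* S} (hf : Function.Surjective f) :
    Function.Surjective (mapQuaternion f) := by
  intro y
  obtain ⟨p, hp⟩ := hf y.re
  obtain ⟨q, hq⟩ := hf y.imI
  obtain ⟨r, hr⟩ := hf y.imJ
  obtain ⟨s, hs⟩ := hf y.imK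
  exact ⟨(equivProd R).symm (p, q, r, s), by ext <;> simp [mapQuaternion, *]⟩

end CommRing

section Field

variable {F : Type*} [Field F] {a b u x : ℍ[F]}

theorem exists_re_mul_ne_zero (hx : x ≠ 0) : ∃ y : ℍ[F], (y * x).re ≠ 0 := by
  by_contra! h
  apply hx
  ext
  · simpa using h 1
  · simpa using h ((equivProd F).symm (0, 1, 0, 0))
  · simpa using h ((equivProd F).symm (0, 0, 1, 0))
  · simpa using h ((equivProd F).symm (0, 0, 0, 1))

variable [NeZero (2 : F)]

/-- The left annihilator of `star a` is thus the left ideal generated by `a`. -/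
theorem exists_forall_mul_mul_eq_self (ha : a ≠ 0) :
    ∃ y : ℍ[F], ∀ x, x * star a = 0 → x * y * a = x := by
  obtain ⟨y, hy⟩ := exists_re_mul_ne_zero ha
  have h1 : ((2 * (y * a).re)⁻¹ • y) * a + star a * star ((2 * (y * a).re)⁻¹ • y) = 1 := by
    rw [← star_mul, self_add_star', smul_mul_assoc, re_smul, smul_eq_mul, mul_left_comm,
      inv_mul_cancel₀ (mul_ne_zero two_ne_zero hy), coe_one]
  refine ⟨(2 * (y * a).re)⁻¹ • y, fun x hx ↦ ?_⟩
  rw [mul_assoc, eq_sub_of_add_eq h1, mul_sub, mul_one, ← mul_assoc, hx, zero_mul, sub_zero]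

theorem exists_eq_smul_of_mul_eq_zero (ha : a ∈ isotropicVectors F) (hu : u.re = 0)
    (hua : u * a = 0) : ∃ k : F, u = k • a := by
  obtain ⟨y, hy⟩ := exists_forall_mul_mul_eq_self ha.2
  have hstar : star a = -a := star_eq_neg_of_re_eq_zero ha.1.1
  have hl : u * y * a = u := hy u (by rw [hstar, mul_neg, hua, neg_zero])
  have hr : a * (star y * u) = -u := by
    simpa [hstar, star_eq_neg_of_re_eq_zero hu, mul_assoc] using congrArg star hl
  refine ⟨-(2 * (star y * u * y * a).re), ?_⟩
  calc u = -(a * (star y * u) * y * a) := by rw [hr, neg_mul, neg_mul, hl, neg_neg]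
    _ = -(a * (star y * u * y) * a) := by simp only [mul_assoc]
    _ = _ := by rw [mul_mul_self, ha.1.2, zero_smul, sub_zero, neg_smul]

theorem exists_mul_mul_star_ne_zero (hx : x ≠ 0) : ∃ z, x * z * star x ≠ 0 := by
  have h4 : (4 : F) ≠ 0 := by simpa [← two_add_two_eq_four, ← two_mul] using two_ne_zero (α := F)
  have of_four_mul {t : F} (ht : 4 * t ^ 2 = 0) : t = 0 := by simpa [h4] using ht
  by_contra! h
  have h1 := congrArg QuaternionAlgebra.re (h 1)
  have hi := congrArg QuaternionAlgebra.imI (h ((equivProd F).symm (0, 1, 0, 0)))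
  have hj := congrArg QuaternionAlgebra.imJ (h ((equivProd F).symm (0, 0, 1, 0)))
  have hk := congrArg QuaternionAlgebra.imK (h ((equivProd F).symm (0, 0, 0, 1)))
  simp only [re_mul, imI_mul, imJ_mul, imK_mul, re_star, imI_star, imJ_star, imK_star, re_one,
    imI_one, imJ_one, imK_one, re_equivProd_symm_apply, imI_equivProd_symm_apply,
    imJ_equivProd_symm_apply, imK_equivProd_symm_apply, re_zero, imI_zero, imJ_zero, imK_zero]
    at h1 hi hj hk
  apply hx
  ext <;> apply of_four_mul
  · linear_combination h1 + hi + hj + hk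
  · linear_combination h1 + hi - hj - hk
  · linear_combination h1 - hi + hj - hk
  · linear_combination h1 - hi - hj + hk

/-- The zero divisor `x` acts as a matrix of rank one, so `z ↦ x * z * star x` factors through a
linear form. -/
theorem exists_mul_mul_star_eq_smul (ha : a ∈ isotropicVectors F) (hx : x ≠ 0) (hxa : x * a = 0) :
    ∃ c : ℍ[F], c ≠ 0 ∧ ∀ z, x * z * star x = (z * a).re • c := by
  obtain ⟨y, hy⟩ := exists_forall_mul_mul_eq_self ha.2
  have hstar : star a = -a := star_eq_neg_of_re_eq_zero ha.1.1
  have hl : x * y * a = x := hy x (by rw [hstar, mul_neg, hxa, neg_zero])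
  have hr : a * (star y * star x) = -star x := by
    rw [← neg_eq_iff_eq_neg, ← neg_mul, ← hstar, ← star_mul, ← star_mul, hl]
  have formula (z : ℍ[F]) : x * z * star x = (z * a).re • ((2 : F) • (x * y * star x)) := by
    calc x * z * star x = -(x * y * a * z * (a * (star y * star x))) := by
          rw [hl, hr, mul_neg, neg_neg]
      _ = -(x * y * (a * z * a) * (star y * star x)) := by simp only [mul_assoc]
      _ = -((2 * (z * a).re) • (x * y * (a * (star y * star x)))) := by
          rw [mul_mul_self, ha.1.2, zero_smul, sub_zero, mul_smul_comm, smul_mul_assoc, mul_assoc]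
      _ = _ := by rw [hr, mul_neg, smul_neg, neg_neg, smul_smul, mul_comm 2]
  obtain ⟨z, hz⟩ := exists_mul_mul_star_ne_zero hx
  refine ⟨_, fun hc ↦ hz ?_, formula⟩
  rw [formula, hc, smul_zero]

theorem exists_mem_isotropicVectors_mul_eq_zero (hx : x ≠ 0) (hn : normSq x = 0) :
    ∃ a ∈ isotropicVectors F, x * a = 0 := by
  obtain ⟨z, hz⟩ := exists_mul_mul_star_ne_zero (star_ne_zero.mpr hx)
  have hn' : normSq (star x) = 0 := by rw [normSq_star, hn]
  refine ⟨_, ⟨⟨?_, ?_⟩, hz⟩, ?_⟩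
  · rw [re_mul_mul_star, hn', zero_mul]
  · rw [map_mul, map_mul, hn', zero_mul, zero_mul]
  · rw [← mul_assoc, ← mul_assoc, self_mul_star, hn, coe_zero, zero_mul, zero_mul]

theorem mul_eq_zero_iff_exists_smul (ha : a ∈ isotropicVectors F) (hx : x ≠ 0) (hxa : x * a = 0)
    (hb : b.re = 0) : x * b = 0 ↔ ∃ k : F, b = k • a := by
  constructor
  · intro hxb
    obtain ⟨y, hy⟩ := exists_forall_mul_mul_eq_self hx
    have hab : a * b = 0 := by
      have h := hy (star a) (by rw [← star_mul, hxa, star_zero])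
      rw [← neg_neg a, ← star_eq_neg_of_re_eq_zero ha.1.1, ← h, neg_mul, mul_assoc, hxb, mul_zero,
        neg_zero]
    exact exists_eq_smul_of_mul_eq_zero ha hb
      ((mul_eq_zero_comm_of_re_eq_zero ha.1.1 hb).mp hab)
  · rintro ⟨k, rfl⟩
    rw [mul_smul_comm, hxa, smul_zero]

theorem re_mul_eq_zero_iff_exists_sub_mul_eq_zero (ha : a ∈ isotropicVectors F) (hu : u.re = 0) :
    (u * a).re = 0 ↔ ∃ k : F, k ^ 2 = -normSq u ∧ (u - k) * a = 0 := by
  constructor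
  · intro h
    obtain ⟨k, hk⟩ := exists_eq_smul_of_mul_eq_zero ha h
      (by rw [mul_assoc, mul_self_eq_zero_of_mem_pureSphere ha.1, mul_zero])
    refine ⟨k, ?_, by rw [sub_mul, hk, coe_mul_eq_smul, sub_self]⟩
    have huu : u * (u * a) = (-normSq u) • a := by
      rw [← mul_assoc, ← neg_neg (u * u), ← mul_neg, ← star_eq_neg_of_re_eq_zero hu,
        self_mul_star, neg_mul, coe_mul_eq_smul, neg_smul]
    rw [hk, mul_smul_comm, hk, smul_smul, ← sq] at huu
    exact smul_left_injective F ha.2 huu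
  · rintro ⟨k, -, hk⟩
    rw [sub_mul, sub_eq_zero] at hk
    rw [hk, coe_mul_eq_smul, re_smul, ha.1.1, smul_zero]

end Field

section Descent

theorem exists_eq_add_mul_four_mul_sq_lt {m : ℕ} (hm : Odd m) (x : ℤ) :
    ∃ y t : ℤ, x = y + m * t ∧ 4 * y ^ 2 < (m : ℤ) ^ 2 := by
  obtain ⟨c, rfl⟩ := hm
  push_cast
  refine ⟨(x + c) % (2 * c + 1) - c, (x + c) / (2 * c + 1), ?_, ?_⟩
  · linear_combination -Int.emod_add_mul_ediv (x + c) (2 * c + 1)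
  · have h0 := Int.emod_nonneg (x + c) (by lia : (2 * c + 1 : ℤ) ≠ 0)
    have h1 := Int.emod_lt_of_pos (x + c) (by lia : (0 : ℤ) < 2 * c + 1)
    rw [show (4 : ℤ) = 2 ^ 2 by rfl, ← mul_pow]
    exact sq_lt_sq' (by lia) (by lia)

theorem exists_eq_add_mul_normSq_lt {m : ℕ} (hm : Odd m) (x : ℍ[ℤ]) :
    ∃ y t : ℍ[ℤ], x = y + m * t ∧ normSq y < (m : ℤ) ^ 2 := by
  obtain ⟨y₀, t₀, h₀, hy₀⟩ := exists_eq_add_mul_four_mul_sq_lt hm x.re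
  obtain ⟨y₁, t₁, h₁, hy₁⟩ := exists_eq_add_mul_four_mul_sq_lt hm x.imI
  obtain ⟨y₂, t₂, h₂, hy₂⟩ := exists_eq_add_mul_four_mul_sq_lt hm x.imJ
  obtain ⟨y₃, t₃, h₃, hy₃⟩ := exists_eq_add_mul_four_mul_sq_lt hm x.imK
  refine ⟨(equivProd ℤ).symm (y₀, y₁, y₂, y₃), (equivProd ℤ).symm (t₀, t₁, t₂, t₃), ?_, ?_⟩
  · ext <;> simp [*]
  · rw [normSq_equivProd_symm]
    linarith

theorem exists_normSq_eq_two_mul_eq_two_mul {x : ℍ[ℤ]} (hx : Even (normSq x)) :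
    ∃ p z : ℍ[ℤ], normSq p = 2 ∧ p * x = 2 * z := by
  have hsum : Even (x.re + x.imI + x.imJ + x.imK) := by
    simpa [normSq_def', parity_simps] using hx
  have of_even (q r s : ℤ) (hp : 1 ^ 2 + q ^ 2 + r ^ 2 + s ^ 2 = 2)
      (h₀ : Even (x.re - q * x.imI - r * x.imJ - s * x.imK))
      (h₁ : Even (x.imI + q * x.re + r * x.imK - s * x.imJ))
      (h₂ : Even (x.imJ - q * x.imK + r * x.re + s * x.imI))
      (h₃ : Even (x.imK + q * x.imJ - r * x.imI + s * x.re)) :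
      ∃ p z : ℍ[ℤ], normSq p = 2 ∧ p * x = 2 * z := by
    obtain ⟨z₀, h₀⟩ := h₀
    obtain ⟨z₁, h₁⟩ := h₁
    obtain ⟨z₂, h₂⟩ := h₂
    obtain ⟨z₃, h₃⟩ := h₃
    refine ⟨(equivProd ℤ).symm (1, q, r, s), (equivProd ℤ).symm (z₀, z₁, z₂, z₃),
      (normSq_equivProd_symm ..).trans hp, ?_⟩
    rw [two_mul]
    ext <;> simp [*]
  have hcases : Even (x.re + x.imI) ∨ Even (x.re + x.imJ) ∨ Even (x.re + x.imK) := by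
    grind
  rcases hcases with h | h | h
  · apply of_even 1 0 0 rfl <;> grind
  · apply of_even 0 1 0 rfl <;> grind
  · apply of_even 0 0 1 rfl <;> grind

variable {ℓ : ℕ} {I : Ideal ℍ[ℤ]}

theorem exists_mem_normSq_half (hℓ : Odd ℓ) (hI : (ℓ : ℍ[ℤ]) ∈ I) {x : ℍ[ℤ]} (hx : x ∈ I) {n : ℤ}
    (hn : normSq x = 2 * n) : ∃ z ∈ I, normSq z = n := by
  obtain ⟨p, z, hp, hz⟩ := exists_normSq_eq_two_mul_eq_two_mul (hn ▸ even_two_mul n)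
  obtain ⟨c, rfl⟩ := hℓ
  refine ⟨z, ?_, ?_⟩
  · have hmem : (2 * c + 1 : ℕ) * z - c * (p * x) ∈ I := by
      rw [Nat.cast_comm]
      exact I.sub_mem (I.mul_mem_left _ hI) (I.mul_mem_left _ (I.mul_mem_left _ hx))
    convert hmem using 1
    rw [hz, ← mul_assoc, ← Nat.cast_ofNat, Nat.cast_comm c, ← sub_mul]
    simp
  · have h2 : normSq (2 : ℍ[ℤ]) = 4 := by exact_mod_cast normSq_natCast (R := ℤ) 2
    have := congrArg normSq hz
    rw [map_mul, map_mul, hp, hn, h2] at this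
    lia

theorem exists_mem_normSq_lt (hI : (ℓ : ℍ[ℤ]) ∈ I) {x : ℍ[ℤ]} (hx : x ∈ I) {k : ℕ} (hk : Odd k)
    (hkℓ : ℓ.Coprime k) (hk1 : k ≠ 1) (hn : normSq x = k * ℓ) :
    ∃ z ∈ I, ∃ m : ℕ, 0 < m ∧ m < k ∧ normSq z = m * ℓ := by
  obtain ⟨y, t, rfl, hy⟩ := exists_eq_add_mul_normSq_lt hk x
  have hk0 : (0 : ℤ) < k := by exact_mod_cast hk.pos
  set z : ℍ[ℤ] := ℓ - star t * (y + k * t) with hz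
  have hyz : star y * (y + k * t) = k * z := by
    have hx : star (y + k * t) * (y + k * t) = k * ℓ := by
      rw [star_mul_self, hn, coe_mul, coe_natCast, coe_natCast]
    rw [hz, mul_sub, ← hx, ← mul_assoc, ← sub_mul, Nat.cast_comm]
    simp
  have hnorm : normSq y * ℓ = k * normSq z := by
    have h := congrArg normSq hyz
    rw [map_mul, map_mul, normSq_star, hn, normSq_natCast] at h
    exact mul_left_cancel₀ hk0.ne' (by linear_combination h)
  have hcop : IsCoprime (k : ℤ) ℓ := Nat.isCoprime_iff_coprime.mpr hkℓ.symm
  obtain ⟨m, hm⟩ : (k : ℤ) ∣ normSq y := hcop.dvd_of_dvd_mul_right ⟨_, hnorm⟩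
  have hy0 : normSq y ≠ 0 := by
    intro h0
    rw [normSq_eq_zero.mp h0, zero_add, map_mul, normSq_natCast, sq, mul_assoc] at hn
    have hdvd : k ∣ ℓ := Int.natCast_dvd_natCast.mp ⟨_, (mul_left_cancel₀ hk0.ne' hn).symm⟩
    exact hk1 (hkℓ.symm.eq_one_of_dvd hdvd)
  have hm0 : 0 < m := pos_of_mul_pos_right (hm ▸ normSq_nonneg.lt_of_ne' hy0) hk0.le
  have hmk : m < k := by nlinarith
  lift m to ℕ using hm0.le
  refine ⟨z, I.sub_mem hI (I.mul_mem_left _ hx), m, by exact_mod_cast hm0,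
    by exact_mod_cast hmk, ?_⟩
  exact mul_left_cancel₀ hk0.ne' (by rw [← hnorm, hm, mul_assoc])

theorem exists_mem_normSq_eq (hℓ : ℓ.Prime) (h2 : ℓ ≠ 2) (hI : (ℓ : ℍ[ℤ]) ∈ I) {k : ℕ}
    (hk : 0 < k) (hkℓ : k < ℓ) {x : ℍ[ℤ]} (hx : x ∈ I) (hn : normSq x = k * ℓ) :
    ∃ y ∈ I, normSq y = ℓ := by
  induction k using Nat.strong_induction_on generalizing x with
  | _ k ih =>
  rcases Nat.even_or_odd' k with ⟨j, rfl | hj⟩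
  · obtain ⟨z, hz, hzn⟩ := exists_mem_normSq_half (hℓ.odd_of_ne_two h2) hI hx (n := j * ℓ)
      (by rw [hn]; push_cast; ring)
    exact ih j (by lia) (by lia) (by lia) hz hzn
  by_cases hk1 : k = 1
  · exact ⟨x, hx, by rw [hn, hk1, Nat.cast_one, one_mul]⟩
  · obtain ⟨z, hz, m, hm0, hmk, hzn⟩ := exists_mem_normSq_lt hI hx ⟨j, hj⟩
      (Nat.coprime_of_lt_prime hk.ne' hkℓ hℓ) hk1 hn
    exact ih m hmk hm0 (hmk.trans hkℓ) hz hzn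

end Descent

section Reduction

variable (ℓ : ℕ)

/-- Reduction of integral quaternions modulo `ℓ`. -/
def reduce : ℍ[ℤ] →+* ℍ[ZMod ℓ] :=
  mapQuaternion (Int.castRingHom (ZMod ℓ))

theorem reduce_surjective : Function.Surjective (reduce ℓ) :=
  mapQuaternion_surjective ZMod.intCast_surjective

theorem re_reduce (x : ℍ[ℤ]) : (reduce ℓ x).re = (x.re : ZMod ℓ) := rfl

theorem normSq_reduce (x : ℍ[ℤ]) : normSq (reduce ℓ x) = ((normSq x : ℤ) : ZMod ℓ) :=
  normSq_mapQuaternion _ x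

theorem reduce_star (x : ℍ[ℤ]) : reduce ℓ (star x) = star (reduce ℓ x) := mapQuaternion_star _ x

variable {ℓ}

theorem reduce_eq_zero_iff {x : ℍ[ℤ]} : reduce ℓ x = 0 ↔ (ℓ : ℍ[ℤ]) ∣ x := by
  constructor
  · intro h
    have hdvd {s : ℤ} (hs : (s : ZMod ℓ) = 0) : ∃ t, s = ℓ * t :=
      (ZMod.intCast_zmod_eq_zero_iff_dvd s ℓ).mp hs
    obtain ⟨t₀, h₀⟩ := hdvd (congrArg QuaternionAlgebra.re h)
    obtain ⟨t₁, h₁⟩ := hdvd (congrArg QuaternionAlgebra.imI h)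
    obtain ⟨t₂, h₂⟩ := hdvd (congrArg QuaternionAlgebra.imJ h)
    obtain ⟨t₃, h₃⟩ := hdvd (congrArg QuaternionAlgebra.imK h)
    exact ⟨(equivProd ℤ).symm (t₀, t₁, t₂, t₃), by ext <;> simp [*]⟩
  · rintro ⟨w, rfl⟩
    rw [map_mul, map_natCast, ← coe_natCast, ZMod.natCast_self, coe_zero, zero_mul]

theorem exists_mem_normSq_eq_of_dvd (hℓ : ℓ.Prime) (h2 : ℓ ≠ 2) {I : Ideal ℍ[ℤ]}
    (hI : (ℓ : ℍ[ℤ]) ∈ I) {x : ℍ[ℤ]} (hx : x ∈ I) (hn : (ℓ : ℤ) ∣ normSq x)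
    (h0 : ¬ (ℓ : ℍ[ℤ]) ∣ x) : ∃ y ∈ I, normSq y = ℓ := by
  obtain ⟨y, t, rfl, hy⟩ := exists_eq_add_mul_normSq_lt (hℓ.odd_of_ne_two h2) x
  have hyI : y ∈ I := by
    rw [Nat.cast_comm] at hx
    exact (I.add_mem_iff_left (I.mul_mem_left t hI)).mp hx
  have hy0 : 0 < normSq y := normSq_nonneg.lt_of_ne' fun h ↦
    h0 ⟨t, by rw [normSq_eq_zero.mp h, zero_add]⟩
  have hred : reduce ℓ (y + ℓ * t) = reduce ℓ y := by
    rw [map_add, reduce_eq_zero_iff.mpr (dvd_mul_right _ t), add_zero]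
  obtain ⟨k, hk⟩ : (ℓ : ℤ) ∣ normSq y := by
    rwa [← ZMod.intCast_zmod_eq_zero_iff_dvd, ← normSq_reduce, hred, normSq_reduce,
      ZMod.intCast_zmod_eq_zero_iff_dvd] at hn
  have hℓ0 : (0 : ℤ) < ℓ := by exact_mod_cast hℓ.pos
  have hk0 : 0 < k := pos_of_mul_pos_right (hk ▸ hy0) hℓ0.le
  have hkℓ : k < ℓ := by nlinarith
  lift k to ℕ using hk0.le
  exact exists_mem_normSq_eq hℓ h2 hI (by exact_mod_cast hk0) (by exact_mod_cast hkℓ) hyI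
    (by rw [hk, mul_comm])

theorem exists_normSq_eq_reduce_mul_eq_zero [Fact ℓ.Prime] [NeZero (2 : ZMod ℓ)] {a : ℍ[ZMod ℓ]}
    (ha : a ∈ isotropicVectors (ZMod ℓ)) : ∃ x : ℍ[ℤ], normSq x = ℓ ∧ reduce ℓ x * a = 0 := by
  have h2 : ℓ ≠ 2 := by
    rintro rfl
    exact two_ne_zero (α := ZMod 2) rfl
  let I : Ideal ℍ[ℤ] := (Ideal.torsionOf ℍ[ZMod ℓ] ℍ[ZMod ℓ] a).comap (reduce ℓ)
  have mem_I {x : ℍ[ℤ]} : x ∈ I ↔ reduce ℓ x * a = 0 := Iff.rfl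
  obtain ⟨x, rfl⟩ := reduce_surjective ℓ a
  have hn : (ℓ : ℤ) ∣ normSq x := by
    rw [← ZMod.intCast_zmod_eq_zero_iff_dvd, ← normSq_reduce, ha.1.2]
  have hI : (ℓ : ℍ[ℤ]) ∈ I := by rw [mem_I, reduce_eq_zero_iff.mpr dvd_rfl, zero_mul]
  obtain ⟨y, hy, hyn⟩ := exists_mem_normSq_eq_of_dvd Fact.out h2 hI
    (mem_I.mpr (mul_self_eq_zero_of_mem_pureSphere ha.1)) hn (mt reduce_eq_zero_iff.mpr ha.2)
  exact ⟨y, hyn, hy⟩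

end Reduction

section Incidence

variable {ℓ : ℕ}

theorem natCast_mul_left_comm {A : Type*} [Semiring A] (m : ℕ) (x y : A) :
    x * (m * y) = m * (x * y) :=
  (Nat.commute_cast x m).left_comm y

theorem natCast_mul_injective (hℓ : ℓ ≠ 0) : Function.Injective ((ℓ : ℍ[ℤ]) * ·) :=
  mul_right_injective₀ fun h ↦ hℓ (by simpa using congrArg QuaternionAlgebra.re h)

theorem reduce_ne_zero_of_normSq_eq (hℓ : ℓ.Prime) {x : ℍ[ℤ]} (hx : normSq x = ℓ) :
    reduce ℓ x ≠ 0 := by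
  rw [Ne, reduce_eq_zero_iff]
  rintro ⟨w, rfl⟩
  rw [map_mul, normSq_natCast, sq, mul_assoc] at hx
  have hℓ0 : (ℓ : ℤ) ≠ 0 := by exact_mod_cast hℓ.ne_zero
  have h1 : (ℓ : ℤ) * normSq w = 1 := mul_left_cancel₀ hℓ0 (by rw [hx, mul_one])
  exact (Nat.prime_iff_prime_int.mp hℓ).not_isUnit (.of_mul_eq_one _ h1)

variable (ℓ) in
/-- The incidence between an isotropic line of `(ℤ/ℓ)³`, spanned by `a`, and a vector `v ∈ ℤ³` of
norm divisible by `ℓ²`: geometrically, `v` lies in `ℓ` times the `ℓ`-neighbour of the lattice `ℤ³`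
attached to the line. The second clause only matters when `v` is divisible by `ℓ`. -/
def Incident (a : ℍ[ZMod ℓ]) (v : ℍ[ℤ]) : Prop :=
  reduce ℓ v * a = 0 ∧ ∀ u, v = ℓ * u → (reduce ℓ u * a).re = 0

variable {a : ℍ[ZMod ℓ]} {x v w : ℍ[ℤ]}

theorem mul_star_mul_mul_mul_star (hx : normSq x = ℓ) :
    x * (star x * w * x) * star x = ℓ * (ℓ * w) := by
  have hxx : x * star x = ℓ := by rw [self_mul_star, hx, coe_natCast]
  calc x * (star x * w * x) * star x = x * star x * w * (x * star x) := by simp only [mul_assoc]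
    _ = ℓ * (ℓ * w) := by rw [hxx, ← Nat.cast_comm]

theorem star_mul_mul_mul_mul (hx : normSq x = ℓ) :
    star x * (x * v * star x) * x = ℓ * (ℓ * v) := by
  simpa using mul_star_mul_mul_mul_star (x := star x) (w := v) (by rwa [normSq_star])

variable [Fact ℓ.Prime] [NeZero (2 : ZMod ℓ)] (ha : a ∈ isotropicVectors (ZMod ℓ))
  (hx : normSq x = ℓ) (hxa : reduce ℓ x * a = 0)
include ha hx hxa

theorem dvd_mul_mul_star_iff : (ℓ : ℍ[ℤ]) ∣ x * v * star x ↔ (reduce ℓ v * a).re = 0 := by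
  obtain ⟨c, hc, h⟩ :=
    exists_mul_mul_star_eq_smul ha (reduce_ne_zero_of_normSq_eq Fact.out hx) hxa
  rw [← reduce_eq_zero_iff, map_mul, map_mul, reduce_star, h, smul_eq_zero_iff_left hc]

theorem incident_star_mul_mul : Incident ℓ a (star x * w * x) := by
  refine ⟨by rw [map_mul, mul_assoc, hxa, mul_zero], fun u hu ↦ ?_⟩
  rw [← dvd_mul_mul_star_iff ha hx hxa]
  have h := mul_star_mul_mul_mul_star (w := w) hx
  rw [hu, natCast_mul_left_comm, mul_assoc] at h
  exact ⟨w, natCast_mul_injective (NeZero.ne ℓ) h⟩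

omit hx in
theorem exists_mul_mul_star_eq_of_reduce_ne_zero (hv : v.re = 0)
    (hvn : (ℓ : ℤ) ^ 2 ∣ normSq v) (hv0 : reduce ℓ v ≠ 0) (hva : reduce ℓ v * a = 0) :
    ∃ w, x * v * star x = ℓ * (ℓ * w) := by
  obtain ⟨m, hm⟩ := hvn
  have hvv : v * v = ℓ * (ℓ * -(m : ℍ[ℤ])) := by
    rw [← neg_neg (v * v), ← mul_neg, ← star_eq_neg_of_re_eq_zero hv, self_mul_star, hm]
    simp only [sq, mul_assoc, coe_mul, coe_natCast, mul_neg, ← coe_intCast, Int.cast_id]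
  have hvre : (reduce ℓ v).re = 0 := by rw [re_reduce, hv, Int.cast_zero]
  obtain ⟨k, hk⟩ := exists_eq_smul_of_mul_eq_zero ha hvre hva
  have hstar : star (reduce ℓ v) = -reduce ℓ v := star_eq_neg_of_re_eq_zero hvre
  have hxv : reduce ℓ x * reduce ℓ v = 0 := by rw [hk, mul_smul_comm, hxa, smul_zero]
  obtain ⟨y, hy⟩ := exists_forall_mul_mul_eq_self hv0
  obtain ⟨g, hg⟩ := reduce_surjective ℓ (reduce ℓ x * y)
  obtain ⟨s, hs⟩ : (ℓ : ℍ[ℤ]) ∣ x - g * v := by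
    rw [← reduce_eq_zero_iff, map_sub, map_mul, hg, hy _ (by simp [hstar, hxv]), sub_self]
  set r : ℍ[ℤ] := s * v - ℓ * (g * m)
  have hr : x * v = ℓ * r := by
    rw [eq_add_of_sub_eq hs, add_mul, mul_assoc g, hvv]
    simp only [r, mul_sub, mul_assoc, natCast_mul_left_comm, mul_neg]
    abel
  have hvx : reduce ℓ v * star (reduce ℓ x) = 0 := by
    simpa [hstar] using congrArg star hxv
  obtain ⟨w, hw⟩ : (ℓ : ℍ[ℤ]) ∣ r * star x := by
    rw [← reduce_eq_zero_iff, map_mul, reduce_star, map_sub,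
      reduce_eq_zero_iff.mpr (dvd_mul_right _ _), sub_zero, map_mul, mul_assoc, hvx, mul_zero]
  exact ⟨w, by rw [hr, mul_assoc, hw]⟩

theorem exists_mul_mul_star_eq (hv : v.re = 0) (hvn : (ℓ : ℤ) ^ 2 ∣ normSq v)
    (hva : Incident ℓ a v) : ∃ w, x * v * star x = ℓ * (ℓ * w) := by
  by_cases hv0 : reduce ℓ v = 0
  · obtain ⟨u, rfl⟩ := reduce_eq_zero_iff.mp hv0
    obtain ⟨w, hw⟩ := (dvd_mul_mul_star_iff ha hx hxa).mpr (hva.2 u rfl)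
    exact ⟨w, by rw [← hw, natCast_mul_left_comm, mul_assoc]⟩
  · exact exists_mul_mul_star_eq_of_reduce_ne_zero ha hxa hv hvn hv0 hva.1

theorem exists_star_mul_mul_eq (hv : v.re = 0) (hvn : (ℓ : ℤ) ^ 2 ∣ normSq v)
    (hva : Incident ℓ a v) : ∃ w : ℍ[ℤ], w.re = 0 ∧ star x * w * x = v := by
  have hinj := natCast_mul_injective (NeZero.ne ℓ)
  obtain ⟨w, hw⟩ := exists_mul_mul_star_eq ha hx hxa hv hvn hva
  refine ⟨w, ?_, hinj (hinj ?_)⟩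
  · have h := congrArg QuaternionAlgebra.re hw
    rw [re_mul_mul_star, hv, mul_zero] at h
    simpa [NeZero.ne ℓ] using h.symm
  · simpa only [hw, natCast_mul_left_comm, mul_assoc] using star_mul_mul_mul_mul (v := v) hx

omit hx hxa in
theorem ncard_incident (n : ℤ) :
    {v ∈ pureSphere (n * (ℓ : ℤ) ^ 2) | Incident ℓ a v}.ncard = (pureSphere n).ncard := by
  obtain ⟨x, hx, hxa⟩ := exists_normSq_eq_reduce_mul_eq_zero ha
  have hx0 : x ≠ 0 := fun h ↦ reduce_ne_zero_of_normSq_eq Fact.out hx (by rw [h, map_zero])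
  have hinj : Function.Injective fun w ↦ star x * w * x :=
    (mul_left_injective₀ hx0).comp (mul_right_injective₀ (star_ne_zero.mpr hx0))
  rw [← Set.ncard_image_of_injective (pureSphere n) hinj]
  congr 1
  ext v
  constructor
  · rintro ⟨⟨hv, hvn⟩, hva⟩
    obtain ⟨w, hw, rfl⟩ := exists_star_mul_mul_eq ha hx hxa hv ⟨n, by rw [hvn, mul_comm]⟩ hva
    have hℓ : (ℓ : ℤ) ^ 2 ≠ 0 := pow_ne_zero 2 (Nat.cast_ne_zero.mpr (NeZero.ne ℓ))
    rw [map_mul, map_mul, normSq_star, hx] at hvn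
    exact ⟨w, ⟨hw, mul_right_cancel₀ hℓ (by linear_combination hvn)⟩, rfl⟩
  · rintro ⟨w, ⟨hw, hwn⟩, rfl⟩
    refine ⟨⟨?_, ?_⟩, incident_star_mul_mul ha hx hxa⟩
    · simpa [hw] using re_mul_mul_star (star x) w
    · simp only [map_mul, normSq_star, hx, hwn]
      ring

end Incidence

section FiniteField

theorem ringChar_ne_two_of_neZero (R : Type*) [NonAssocSemiring R] [NeZero (2 : R)] :
    ringChar R ≠ 2 := fun h ↦
  two_ne_zero (α := R) (by simpa [h] using ringChar.Nat.cast_ringChar (R := R))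

variable (F : Type*) [Field F] [Fintype F] [NeZero (2 : F)]

section quadraticChar

variable [DecidableEq F]

theorem exists_quadraticChar_sq_add_sq_eq_neg_one :
    ∃ g h : F, quadraticChar F (g ^ 2 + h ^ 2) = -1 := by
  obtain ⟨c, hc⟩ := quadraticChar_exists_neg_one (ringChar_ne_two_of_neZero F)
  obtain ⟨g, h, hgh⟩ := FiniteField.exists_root_sum_quadratic
    (Polynomial.degree_X_pow (R := F) 2) (Polynomial.degree_X_pow_sub_C two_pos c)
    (FiniteField.odd_card_of_char_ne_two (ringChar_ne_two_of_neZero F))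
  refine ⟨g, h, ?_⟩
  rw [← hc]
  congr 1
  simpa [← add_sub_assoc, sub_eq_zero] using hgh

theorem sum_quadraticChar_sq_add_sq :
    ∑ p : F × F, quadraticChar F (p.1 ^ 2 + p.2 ^ 2) = 0 := by
  obtain ⟨g, h, hgh⟩ := exists_quadraticChar_sq_add_sq_eq_neg_one F
  have hne : g ^ 2 + h ^ 2 ≠ 0 := fun h0 ↦ by simp [h0] at hgh
  let f (p : F × F) : F × F := (g * p.1 - h * p.2, h * p.1 + g * p.2)
  have hf : f.Bijective := by
    rw [← Finite.injective_iff_bijective]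
    rintro ⟨x, y⟩ ⟨x', y'⟩ hxy
    obtain ⟨h1, h2⟩ := Prod.mk.inj hxy
    refine Prod.ext (mul_left_cancel₀ hne ?_) (mul_left_cancel₀ hne ?_)
    · linear_combination g * h1 + h * h2
    · linear_combination g * h2 - h * h1
  have hsum : ∑ p : F × F, quadraticChar F (p.1 ^ 2 + p.2 ^ 2) =
      -∑ p : F × F, quadraticChar F (p.1 ^ 2 + p.2 ^ 2) :=
    calc ∑ p : F × F, quadraticChar F (p.1 ^ 2 + p.2 ^ 2)
      _ = ∑ p, quadraticChar F ((f p).1 ^ 2 + (f p).2 ^ 2) :=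
          (hf.sum_comp fun p ↦ quadraticChar F (p.1 ^ 2 + p.2 ^ 2)).symm
      _ = ∑ p : F × F, quadraticChar F ((g ^ 2 + h ^ 2) * (p.1 ^ 2 + p.2 ^ 2)) :=
          Finset.sum_congr rfl fun p _ ↦ congrArg _ (by simp only [f]; ring)
      _ = _ := by simp only [map_mul, hgh, neg_one_mul, Finset.sum_neg_distrib]
  lia

variable {F} in
theorem ncard_sq_eq (d : F) : ({k : F | k ^ 2 = d}.ncard : ℤ) = quadraticChar F d + 1 := by
  rw [← quadraticChar_card_sqrts (ringChar_ne_two_of_neZero F), Set.ncard_eq_toFinset_card']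

end quadraticChar

theorem ncard_pureSphere_zero : (pureSphere (0 : F)).ncard = Fintype.card F ^ 2 := by
  classical
  let e : (Σ p : F × F, {k : F | k ^ 2 = -(p.1 ^ 2 + p.2 ^ 2)}) ≃ pureSphere (0 : F) :=
    { toFun t := ⟨(equivProd F).symm (0, t.1.1, t.1.2, t.2.1), rfl, by
        rw [normSq_equivProd_symm, t.2.2]; ring⟩
      invFun v := ⟨(v.1.imI, v.1.imJ), v.1.imK, by
        have h := v.2.2
        rw [normSq_def', v.2.1] at h
        exact eq_neg_of_add_eq_zero_left (by linear_combination h)⟩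
      left_inv t := rfl
      right_inv v := Subtype.ext (by ext <;> simp [v.2.1]) }
  have hcard (p : F × F) : (Nat.card {k : F | k ^ 2 = -(p.1 ^ 2 + p.2 ^ 2)} : ℤ) =
      quadraticChar F (-1) * quadraticChar F (p.1 ^ 2 + p.2 ^ 2) + 1 := by
    rw [Nat.card_coe_set_eq, ncard_sq_eq, ← map_mul, neg_one_mul]
  have : ((pureSphere (0 : F)).ncard : ℤ) = Fintype.card F ^ 2 := by
    rw [← Nat.card_coe_set_eq, ← Nat.card_congr e, Nat.card_sigma, Nat.cast_sum]
    simp only [hcard]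
    rw [Finset.sum_add_distrib, ← Finset.mul_sum, sum_quadraticChar_sq_add_sq]
    simp [sq]
  exact_mod_cast this

theorem ncard_isotropicVectors : ((isotropicVectors F).ncard : ℤ) = Fintype.card F ^ 2 - 1 := by
  have hmem : (0 : ℍ[F]) ∈ pureSphere 0 := ⟨rfl, map_zero _⟩
  rw [isotropicVectors, eq_sub_iff_add_eq]
  exact_mod_cast (Set.ncard_sdiff_singleton_add_one hmem).trans (ncard_pureSphere_zero F)

variable {F}

theorem ncard_isotropicVectors_mul_eq_zero {x : ℍ[F]} (hx : x ≠ 0) (hn : normSq x = 0) :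
    ({a ∈ isotropicVectors F | x * a = 0}.ncard : ℤ) = Fintype.card F - 1 := by
  obtain ⟨a, ha, hxa⟩ := exists_mem_isotropicVectors_mul_eq_zero hx hn
  have h : {b ∈ isotropicVectors F | x * b = 0} = (fun k : F ↦ k • a) '' {0}ᶜ := by
    ext b
    constructor
    · rintro ⟨hb, hxb⟩
      obtain ⟨k, rfl⟩ := (mul_eq_zero_iff_exists_smul ha hx hxa hb.1.1).mp hxb
      exact ⟨k, fun hk ↦ hb.2 (by simp [Set.mem_singleton_iff.mp hk]), rfl⟩
    · rintro ⟨k, hk, rfl⟩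
      refine ⟨⟨⟨?_, ?_⟩, smul_ne_zero hk ha.2⟩, by rw [mul_smul_comm, hxa, smul_zero]⟩
      · rw [re_smul, ha.1.1, smul_zero]
      · rw [normSq_smul, ha.1.2, mul_zero]
  rw [h, Set.ncard_image_of_injective _ (smul_left_injective F ha.2), Set.ncard_compl,
    Set.ncard_singleton, Nat.card_eq_fintype_card, Nat.cast_pred Fintype.card_pos]

theorem ncard_isotropicVectors_re_mul_eq_zero [DecidableEq F] {w : ℍ[F]} (hw : w.re = 0)
    (hw0 : w ≠ 0) :
    ({a ∈ isotropicVectors F | (w * a).re = 0}.ncard : ℤ) =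
      (Fintype.card F - 1) * (quadraticChar F (-normSq w) + 1) := by
  let s (k : F) : Set ℍ[F] := {a ∈ isotropicVectors F | (w - k) * a = 0}
  have hunion : {a ∈ isotropicVectors F | (w * a).re = 0} =
      ⋃ k ∈ {k : F | k ^ 2 = -normSq w}, s k := by
    ext a
    simp only [s, Set.mem_iUnion, Set.mem_ofPred_eq, exists_prop]
    grind [re_mul_eq_zero_iff_exists_sub_mul_eq_zero]
  have eigen {k : F} {a : ℍ[F]} (h : (w - k) * a = 0) : w * a = k • a := by
    rwa [sub_mul, sub_eq_zero, coe_mul_eq_smul] at h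
  have hdisj : {k : F | k ^ 2 = -normSq w}.PairwiseDisjoint s :=
    fun _ _ _ _ hne ↦ Set.disjoint_left.mpr fun _ hk hm ↦
      hne (smul_left_injective F hk.1.2 ((eigen hk.2).symm.trans (eigen hm.2)))
  have hcard (k : F) (hk : k ^ 2 = -normSq w) : ((s k).ncard : ℤ) = Fintype.card F - 1 := by
    refine ncard_isotropicVectors_mul_eq_zero (fun h ↦ hw0 ?_) ?_
    · have hwk : w = k := sub_eq_zero.mp h
      rw [hwk, ← re_coe k, ← hwk, hw, coe_zero]
    · rw [sub_eq_add_neg, normSq_add, normSq_neg, normSq_coe, hk]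
      simp [hw]
  rw [hunion, Set.Finite.ncard_biUnion (Set.toFinite _) (fun _ _ ↦ Set.toFinite _) hdisj,
    finsum_mem_eq_toFinset_sum, Nat.cast_sum, ← ncard_sq_eq, Set.ncard_eq_toFinset_card', mul_comm,
    ← nsmul_eq_mul]
  exact Finset.sum_eq_card_nsmul fun k hk ↦ hcard k (by simpa using hk)

end FiniteField

section Counting

/-- The number `r₃(n)` of representations of `n` as an ordered sum of three integral squares. -/
noncomputable def sumThreeSquaresCount (n : ℤ) : ℕ :=
  Set.ncard {t : ℤ × ℤ × ℤ | t.1 ^ 2 + t.2.1 ^ 2 + t.2.2 ^ 2 = n}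

theorem ncard_pureSphere_int (n : ℤ) : (pureSphere n).ncard = sumThreeSquaresCount n := by
  let f (t : ℤ × ℤ × ℤ) : ℍ[ℤ] := (equivProd ℤ).symm (0, t)
  have hf : f.Injective := (equivProd ℤ).symm.injective.comp (Prod.mk_right_injective 0)
  rw [sumThreeSquaresCount, ← Set.ncard_image_of_injective _ hf]
  congr 1
  ext v
  constructor
  · rintro ⟨hv, hvn⟩
    rw [normSq_def', hv] at hvn
    refine ⟨(v.imI, v.imJ, v.imK), ?_, by ext <;> simp [f, hv]⟩
    rw [Set.mem_ofPred_eq]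
    linear_combination hvn
  · rintro ⟨t, ht, rfl⟩
    exact ⟨rfl, by rw [← ht.out, normSq_equivProd_symm]; ring⟩

theorem finite_pureSphere_int (n : ℤ) : (pureSphere n).Finite := by
  refine ((Set.finite_Icc (-n, -n, -n, -n) (n, n, n, n)).preimage
    (equivProd ℤ).injective.injOn).subset fun v hv ↦ ?_
  have hn := hv.2
  rw [normSq_def'] at hn
  have mem_Icc {k : ℤ} (hk : k ^ 2 ≤ n) : -n ≤ k ∧ k ≤ n := ⟨by nlinarith, by nlinarith⟩
  have h₀ := mem_Icc (k := v.re) (by nlinarith)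
  have h₁ := mem_Icc (k := v.imI) (by nlinarith)
  have h₂ := mem_Icc (k := v.imJ) (by nlinarith)
  have h₃ := mem_Icc (k := v.imK) (by nlinarith)
  exact ⟨⟨h₀.1, h₁.1, h₂.1, h₃.1⟩, h₀.2, h₁.2, h₂.2, h₃.2⟩

theorem sumThreeSquaresCount_three : sumThreeSquaresCount 3 = 8 := by
  have h : {t : ℤ × ℤ × ℤ | t.1 ^ 2 + t.2.1 ^ 2 + t.2.2 ^ 2 = 3} =
      (({-1, 1} ×ˢ {-1, 1} ×ˢ {-1, 1} : Finset (ℤ × ℤ × ℤ)) : Set (ℤ × ℤ × ℤ)) := by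
    ext ⟨x, y, z⟩
    simp only [Set.mem_ofPred_eq, Finset.coe_product, Set.mem_prod, Finset.mem_coe,
      Finset.mem_insert, Finset.mem_singleton]
    constructor
    · intro h
      have hx : -1 ≤ x ∧ x ≤ 1 := ⟨by nlinarith, by nlinarith⟩
      have hy : -1 ≤ y ∧ y ≤ 1 := ⟨by nlinarith, by nlinarith⟩
      have hz : -1 ≤ z ∧ z ≤ 1 := ⟨by nlinarith, by nlinarith⟩
      have eq_or {k : ℤ} (hk : -1 ≤ k ∧ k ≤ 1) : k = -1 ∨ k = 0 ∨ k = 1 := by lia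
      rcases eq_or hx with rfl | rfl | rfl <;> rcases eq_or hy with rfl | rfl | rfl <;>
        rcases eq_or hz with rfl | rfl | rfl <;> revert h <;> decide
    · rintro ⟨rfl | rfl, rfl | rfl, rfl | rfl⟩ <;> rfl
  rw [sumThreeSquaresCount, h, Set.ncard_coe_finset]
  rfl

section Divisible

variable {ℓ : ℕ} [NeZero ℓ]

theorem sep_pureSphere_reduce_eq_zero (m : ℤ) :
    {v ∈ pureSphere (m * (ℓ : ℤ) ^ 2) | reduce ℓ v = 0} =
      ((ℓ : ℍ[ℤ]) * ·) '' pureSphere m := by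
  have hℓ : (ℓ : ℤ) ≠ 0 := Nat.cast_ne_zero.mpr (NeZero.ne ℓ)
  ext v
  simp only [reduce_eq_zero_iff]
  constructor
  · rintro ⟨⟨hv, hvn⟩, u, rfl⟩
    rw [map_mul, normSq_natCast, mul_comm] at hvn
    exact ⟨u, ⟨by simpa [NeZero.ne ℓ] using hv, mul_right_cancel₀ (pow_ne_zero 2 hℓ) hvn⟩, rfl⟩
  · rintro ⟨u, ⟨hu, hun⟩, rfl⟩
    exact ⟨⟨by simp [hu], by rw [map_mul, normSq_natCast, hun, mul_comm]⟩, dvd_mul_right _ _⟩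

theorem ncard_sep_pureSphere_reduce_eq_zero (n : ℤ) :
    {v ∈ pureSphere n | reduce ℓ v = 0}.ncard =
      if (ℓ : ℤ) ^ 2 ∣ n then sumThreeSquaresCount (n / (ℓ : ℤ) ^ 2) else 0 := by
  split_ifs with h
  · obtain ⟨m, rfl⟩ := h
    rw [mul_comm, sep_pureSphere_reduce_eq_zero,
      Set.ncard_image_of_injective _ (natCast_mul_injective (NeZero.ne ℓ)), ncard_pureSphere_int,
      Int.mul_ediv_cancel _ (pow_ne_zero 2 (Nat.cast_ne_zero.mpr (NeZero.ne ℓ)))]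
  · rw [Set.ncard_eq_zero ((finite_pureSphere_int n).subset (Set.sep_subset _ _)),
      Set.eq_empty_iff_forall_notMem]
    rintro v ⟨⟨-, hvn⟩, hv⟩
    obtain ⟨u, rfl⟩ := reduce_eq_zero_iff.mp hv
    exact h ⟨normSq u, by rw [← hvn, map_mul, normSq_natCast]⟩

theorem incident_natCast_mul_iff {a : ℍ[ZMod ℓ]} {u : ℍ[ℤ]} :
    Incident ℓ a (ℓ * u) ↔ (reduce ℓ u * a).re = 0 := by
  constructor
  · exact fun h ↦ h.2 u rfl
  · refine fun h ↦ ⟨?_, fun w hw ↦ ?_⟩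
    · rw [reduce_eq_zero_iff.mpr (dvd_mul_right _ _), zero_mul]
    · rwa [← natCast_mul_injective (NeZero.ne ℓ) hw]

end Divisible

/-- The isotropic vectors modulo `ℓ` incident to `v`. Their number is the weight of `v` in the
double count. -/
def incidentVectors (ℓ : ℕ) (v : ℍ[ℤ]) : Set ℍ[ZMod ℓ] :=
  {a ∈ isotropicVectors (ZMod ℓ) | Incident ℓ a v}

variable {ℓ : ℕ} [Fact ℓ.Prime] [NeZero (2 : ZMod ℓ)]

theorem ncard_incidentVectors_of_reduce_ne_zero {v : ℍ[ℤ]} (hvn : (ℓ : ℤ) ∣ normSq v)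
    (hv : reduce ℓ v ≠ 0) : ((incidentVectors ℓ v).ncard : ℤ) = ℓ - 1 := by
  have h (a : ℍ[ZMod ℓ]) : Incident ℓ a v ↔ reduce ℓ v * a = 0 :=
    and_iff_left fun u hu ↦ (hv (reduce_eq_zero_iff.mpr ⟨u, hu⟩)).elim
  simp only [incidentVectors, h]
  rw [ncard_isotropicVectors_mul_eq_zero hv, ZMod.card]
  rwa [normSq_reduce, ZMod.intCast_zmod_eq_zero_iff_dvd]

open scoped Classical in
theorem ncard_incidentVectors_natCast_mul {n : ℤ} {u : ℍ[ℤ]} (hu : u ∈ pureSphere n) :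
    ((incidentVectors ℓ (ℓ * u)).ncard : ℤ) =
      (ℓ - 1) * (legendreSym ℓ (-n) + 1 + if reduce ℓ u = 0 then (ℓ : ℤ) else 0) := by
  have hn : (n : ZMod ℓ) = normSq (reduce ℓ u) := by rw [normSq_reduce, hu.2]
  simp only [incidentVectors, incident_natCast_mul_iff, legendreSym, Int.cast_neg, hn]
  split_ifs with h
  · simp only [h, zero_mul, re_zero, and_true, Set.ofPred_mem_eq, ncard_isotropicVectors,
      ZMod.card, map_zero, neg_zero, MulChar.map_zero]
    ring
  · rw [ncard_isotropicVectors_re_mul_eq_zero (by rw [re_reduce, hu.1, Int.cast_zero]) h,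
      ZMod.card, add_zero]

theorem finsum_ncard_incidentVectors (n : ℤ) :
    ∑ᶠ v ∈ pureSphere (n * (ℓ : ℤ) ^ 2), ((incidentVectors ℓ v).ncard : ℤ) =
      ((ℓ : ℤ) ^ 2 - 1) * sumThreeSquaresCount n := by
  classical
  have h := Finset.sum_card_bipartiteAbove_eq_sum_card_bipartiteBelow
    (s := (isotropicVectors (ZMod ℓ)).toFinite.toFinset)
    (t := (finite_pureSphere_int (n * (ℓ : ℤ) ^ 2)).toFinset) (Incident ℓ)
  simp only [← Set.ncard_coe_finset, Finset.coe_bipartiteAbove, Finset.coe_bipartiteBelow,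
    Set.Finite.mem_toFinset] at h
  rw [Finset.sum_congr rfl fun a ha ↦ ncard_incident ((Set.Finite.mem_toFinset _).mp ha) n,
    Finset.sum_const, ← Set.ncard_eq_toFinset_card, smul_eq_mul, ncard_pureSphere_int] at h
  have hiso := ncard_isotropicVectors (ZMod ℓ)
  rw [ZMod.card] at hiso
  rw [finsum_mem_eq_finite_toFinset_sum _ (finite_pureSphere_int _), ← hiso]
  exact_mod_cast h.symm

theorem finsum_ncard_incidentVectors_of_reduce_eq_zero (n : ℤ) :
    ∑ᶠ v ∈ {v ∈ pureSphere (n * (ℓ : ℤ) ^ 2) | reduce ℓ v = 0},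
      ((incidentVectors ℓ v).ncard : ℤ) =
      (ℓ - 1) * ((legendreSym ℓ (-n) + 1) * sumThreeSquaresCount n +
        ℓ * {v ∈ pureSphere n | reduce ℓ v = 0}.ncard) := by
  classical
  have hfin := finite_pureSphere_int n
  rw [sep_pureSphere_reduce_eq_zero, finsum_mem_image (natCast_mul_injective (NeZero.ne ℓ)).injOn,
    finsum_mem_congr rfl fun u hu ↦ ncard_incidentVectors_natCast_mul hu,
    finsum_mem_eq_finite_toFinset_sum _ hfin, ← Finset.mul_sum,
    Finset.sum_add_distrib, Finset.sum_const, ← Set.ncard_eq_toFinset_card _ hfin,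
    ncard_pureSphere_int, ← Finset.sum_filter, Finset.sum_const, ← Set.ncard_coe_finset,
    Finset.coe_filter]
  simp only [Set.Finite.mem_toFinset, nsmul_eq_mul]
  ring

theorem finsum_ncard_incidentVectors_of_reduce_ne_zero (n : ℤ) :
    ∑ᶠ v ∈ pureSphere (n * (ℓ : ℤ) ^ 2) \ {v | reduce ℓ v = 0},
      ((incidentVectors ℓ v).ncard : ℤ) =
      (ℓ - 1) * (sumThreeSquaresCount (n * (ℓ : ℤ) ^ 2) - sumThreeSquaresCount n) := by
  have hfin := finite_pureSphere_int (n * (ℓ : ℤ) ^ 2)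
  have hcard : {v ∈ pureSphere (n * (ℓ : ℤ) ^ 2) | reduce ℓ v = 0}.ncard + _ = _ :=
    Set.ncard_inter_add_ncard_sdiff_eq_ncard _ {v | reduce ℓ v = 0} hfin
  rw [sep_pureSphere_reduce_eq_zero,
    Set.ncard_image_of_injective _ (natCast_mul_injective (NeZero.ne ℓ)), ncard_pureSphere_int,
    ncard_pureSphere_int] at hcard
  have hweight (v) (hv : v ∈ pureSphere (n * (ℓ : ℤ) ^ 2) \ {v | reduce ℓ v = 0}) :
      ((incidentVectors ℓ v).ncard : ℤ) = ℓ - 1 :=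
    ncard_incidentVectors_of_reduce_ne_zero
      (hv.1.2 ▸ (dvd_pow_self _ two_ne_zero).mul_left n) hv.2
  rw [finsum_mem_congr rfl hweight, finsum_mem_eq_finite_toFinset_sum _ hfin.sdiff,
    Finset.sum_const, ← Set.ncard_eq_toFinset_card _ hfin.sdiff, nsmul_eq_mul, ← hcard]
  push_cast
  ring

theorem sumThreeSquaresCount_mul_sq (n : ℤ) :
    (sumThreeSquaresCount (n * (ℓ : ℤ) ^ 2) : ℤ) +
        ℓ * {v ∈ pureSphere n | reduce ℓ v = 0}.ncard =
      (ℓ + 1 - legendreSym ℓ (-n)) * sumThreeSquaresCount n := by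
  have hsplit : ∑ᶠ v ∈ {v ∈ pureSphere (n * (ℓ : ℤ) ^ 2) | reduce ℓ v = 0},
      ((incidentVectors ℓ v).ncard : ℤ) + _ = _ :=
    finsum_mem_inter_add_sdiff {v | reduce ℓ v = 0} (finite_pureSphere_int _)
  rw [finsum_ncard_incidentVectors, finsum_ncard_incidentVectors_of_reduce_eq_zero,
    finsum_ncard_incidentVectors_of_reduce_ne_zero] at hsplit
  have hℓ : (ℓ : ℤ) - 1 ≠ 0 := sub_ne_zero.mpr (mod_cast (Fact.out : ℓ.Prime).ne_one)
  exact mul_left_cancel₀ hℓ (by linear_combination hsplit)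

end Counting

end ThreeSquares

open ThreeSquares in
/-- This is the Hecke relation: the theta series `∑ r₃(n) qⁿ` is an eigenfunction of `T(ℓ²)` with
eigenvalue `ℓ + 1`. -/
theorem sum_three_squares_count_three_ell_sq_general {ℓ : ℕ} [Fact ℓ.Prime] (h2 : ℓ ≠ 2) (n : ℤ) :
    (sumThreeSquaresCount (n * (ℓ : ℤ) ^ 2) : ℤ) +
        ℓ * (if (ℓ : ℤ) ^ 2 ∣ n then sumThreeSquaresCount (n / (ℓ : ℤ) ^ 2) else 0 : ℕ) =
      (ℓ + 1 - legendreSym ℓ (-n)) * sumThreeSquaresCount n := by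
  have h2_dvd : ¬ ℓ ∣ 2 := mt (Nat.prime_dvd_prime_iff_eq Fact.out Nat.prime_two).mp h2
  have : NeZero (2 : ZMod ℓ) := ⟨mt (ZMod.natCast_eq_zero_iff 2 ℓ).mp h2_dvd⟩
  rw [← ncard_sep_pureSphere_reduce_eq_zero]
  exact sumThreeSquaresCount_mul_sq n

theorem sum_three_squares_count_three_ell_sq (ℓ : ℕ) (hℓ : ℓ.Prime) (h3 : 3 < ℓ) :
    (Set.ncard {t : ℤ × ℤ × ℤ |
        t.1 ^ 2 + t.2.1 ^ 2 + t.2.2 ^ 2 = 3 * (ℓ : ℤ) ^ 2} : ℤ) =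
      8 * ((ℓ : ℤ) + 1 - @legendreSym ℓ ⟨hℓ⟩ (-3)) := by
  have : Fact ℓ.Prime := ⟨hℓ⟩
  have hecke := sum_three_squares_count_three_ell_sq_general (show ℓ ≠ 2 by lia) 3
  have hdvd : ¬ (ℓ : ℤ) ^ 2 ∣ 3 := fun h ↦ by
    have := Int.le_of_dvd three_pos h
    nlinarith
  rw [if_neg hdvd, ThreeSquares.sumThreeSquaresCount_three, Nat.cast_zero, mul_zero,
    add_zero] at hecke
  exact hecke.trans (mul_comm _ _)
end

section
/- Let m ≥ 6 be an integer with m ≡ 2 (mod 4). Then for every 2-adic integer n ∈ ℤ₂ there exists x ∈ ℤ₂ such that 2n = (m−2)x² − (m−4)x; that is, every 2-adic integer is a 2-adic generalized m-gonal number. -/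
/-! If `m - 2 = 4 * k`, then half of the equation `2 * n = (m - 2) * x ^ 2 - (m - 4) * x` reads
`2 * k * x ^ 2 + (1 - 2 * k) * x = n`. Modulo `2` this is the linear equation `x = n`, whose simple
root `n` lifts by Hensel's lemma in any ring that is Henselian at an ideal containing `2`. -/

open Ideal IsLocalRing Polynomial

section HenselianRing

variable {R : Type*} [CommRing R] {I : Ideal R}

theorem isUnit_of_sub_mem_of_le_jacobson_bot (hI : I ≤ jacobson ⊥) {a b : R} (hb : IsUnit b)
    (hab : a - b ∈ I) : IsUnit a := by
  have := isLocalHom_of_le_jacobson_bot I hI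
  have hmk : Ideal.Quotient.mk I a = Ideal.Quotient.mk I b := Ideal.Quotient.eq.mpr hab
  exact IsUnit.of_map (Ideal.Quotient.mk I) a (hmk ▸ hb.map _)

variable [HenselianRing R I]

theorem exists_mem_sq_add_mul_eq {b c : R} (hb : IsUnit b) (hc : c ∈ I) :
    ∃ y ∈ I, y ^ 2 + b * y = c := by
  let f : R[X] := X ^ 2 + (C b * X + C (-c))
  have f_monic : f.Monic := monic_X_pow_add degree_linear_lt
  have f_zero : f.eval 0 ∈ I := by simpa [f] using hc
  have f_deriv_zero : f.derivative.eval 0 = b := by simp [f]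
  obtain ⟨y, hy, hyI⟩ := HenselianRing.is_henselian f f_monic 0 f_zero
    (f_deriv_zero ▸ hb.map (Ideal.Quotient.mk I))
  have hroot : y ^ 2 + (b * y + -c) = 0 := by simpa [f] using hy
  exact ⟨y, by simpa only [sub_zero] using hyI, by linear_combination hroot⟩

theorem exists_mul_sq_add_mul_eq {a b : R} (ha : a ∈ I) (hb : IsUnit b) (c : R) :
    ∃ x, a * x ^ 2 + b * x = c := by
  -- Hensel's lemma is for monic polynomials, so multiply by `a` and solve for `y = a * x`;
  -- then `(y + b) * x = c` recovers `x` even when `a` is a zero divisor.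
  obtain ⟨y, hyI, hy⟩ := exists_mem_sq_add_mul_eq hb (I.mul_mem_right c ha)
  have hyb : IsUnit (y + b) :=
    isUnit_of_sub_mem_of_le_jacobson_bot HenselianRing.jac hb (by rwa [add_sub_cancel_right])
  obtain ⟨x, hx⟩ := hyb.dvd (a := c)
  have hax : a * x = y := hyb.mul_left_cancel (by linear_combination -hy - a * hx)
  exact ⟨x, by linear_combination x * hax - hx⟩

theorem two_adic_universality_of_two_mod_four_general (h2 : (2 : R) ∈ I) {m : R}
    (hm : 4 ∣ m - 2) (n : R) : ∃ x, 2 * n = (m - 2) * x ^ 2 - (m - 4) * x := by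
  obtain ⟨k, hk⟩ := hm
  have h2k : 2 * k ∈ I := I.mul_mem_right k h2
  have hunit : IsUnit (1 - 2 * k) :=
    isUnit_of_sub_mem_of_le_jacobson_bot HenselianRing.jac isUnit_one
      (by simpa only [sub_sub_cancel_left] using I.neg_mem h2k)
  obtain ⟨x, hx⟩ := exists_mul_sq_add_mul_eq h2k hunit n
  exact ⟨x, by linear_combination (x - x ^ 2) * hk - 2 * hx⟩

end HenselianRing

theorem two_adic_universality_of_two_mod_four
    (m : ℤ) (hm : 6 ≤ m) (h4 : m % 4 = 2) (n : ℤ_[2]) :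
    ∃ x : ℤ_[2], 2 * n = ((m : ℤ_[2]) - 2) * x ^ 2 - ((m : ℤ_[2]) - 4) * x := by
  have hdvd : (4 : ℤ_[2]) ∣ m - 2 := mod_cast (Int.castRingHom ℤ_[2]).map_dvd (by omega : 4 ∣ m - 2)
  exact two_adic_universality_of_two_mod_four_general (I := maximalIdeal ℤ_[2])
    PadicInt.p_nonunit hdvd n
end

section
/- Let m ≥ 3 be an odd integer. Then for every 2-adic integer n ∈ ℤ₂ there exists x ∈ ℤ₂ such that 2n = (m−2)x² − (m−4)x; that is, every 2-adic integer is a 2-adic generalized m-gonal number. -/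
/-!
Modulo `2` the equation `(m - 2) x² - (m - 4) x - 2n = 0` has the root `x = 0`, which is simple
because `m - 4` is odd. Hensel's lemma lifts it to a root in `ℤ₂`.
-/

open Polynomial

section Henselian

variable {R : Type*} [CommRing R] {I : Ideal R}

theorem isUnit_of_sub_mem_of_le_jacobson_bot_s15 (hI : I ≤ Ideal.jacobson ⊥) {x y : R}
    (hx : IsUnit x) (hyx : y - x ∈ I) : IsUnit y := by
  have : IsLocalHom (Ideal.Quotient.mk I) := isLocalHom_of_le_jacobson_bot I hI
  apply isUnit_of_map_unit (Ideal.Quotient.mk I)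
  rw [Ideal.Quotient.eq.mpr hyx]
  exact hx.map (Ideal.Quotient.mk I)

variable [HenselianRing R I]

theorem exists_mem_sq_add_mul_add_eq_zero {b c : R} (hb : IsUnit b) (hc : c ∈ I) :
    ∃ t ∈ I, t ^ 2 + b * t + c = 0 := by
  let f : R[X] := X ^ 2 + (C b * X + C c)
  have hf : f.Monic := monic_X_pow_add degree_linear_lt
  have eval_f (t : R) : f.eval t = t ^ 2 + b * t + c := by simp [f, add_assoc]
  have eval_derivative_f : f.derivative.eval 0 = b := by simp [f]
  obtain ⟨t, ht, htI⟩ := HenselianRing.is_henselian (I := I) f hf 0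
    (by simpa [eval_f] using hc)
    (eval_derivative_f.symm ▸ hb.map (Ideal.Quotient.mk I))
  exact ⟨t, by simpa using htI, eval_f t ▸ ht⟩

-- `HenselianRing` only lifts roots of monic polynomials, and `a` need not be a unit. A root `x`
-- makes `t = a * x` a root of the monic `t ^ 2 + b * t + a * c`; conversely, lifting `t = 0` makes
-- `t + b` a unit, and `x = -c / (t + b)`.
theorem exists_mem_quadratic_eq_zero (a : R) {b c : R} (hb : IsUnit b) (hc : c ∈ I) :
    ∃ x ∈ I, a * x ^ 2 + b * x + c = 0 := by
  obtain ⟨t, htI, ht⟩ := exists_mem_sq_add_mul_add_eq_zero hb (I.mul_mem_left a hc)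
  have htb : IsUnit (t + b) :=
    isUnit_of_sub_mem_of_le_jacobson_bot_s15 HenselianRing.jac hb (by simpa using htI)
  obtain ⟨x, hx⟩ : t + b ∣ -c := htb.dvd
  have hxI : x ∈ I := (I.unit_mul_mem_iff_mem htb).mp (hx ▸ I.neg_mem hc)
  have hax : a * x = t := htb.mul_left_cancel (by linear_combination -a * hx - ht)
  exact ⟨x, hxI, by linear_combination x * hax - hx⟩

theorem two_adic_universality_of_odd_general (h2 : (2 : R) ∈ I) {m : R} (hm : IsUnit m) (n : R) :
    ∃ x : R, 2 * n = (m - 2) * x ^ 2 - (m - 4) * x := by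
  have h4 : m - 4 - m ∈ I := by
    convert I.mul_mem_left (-2) h2 using 1
    ring
  have hm4 : IsUnit (m - 4) := isUnit_of_sub_mem_of_le_jacobson_bot_s15 HenselianRing.jac hm h4
  obtain ⟨x, -, hx⟩ :=
    exists_mem_quadratic_eq_zero (m - 2) hm4.neg (I.neg_mem (I.mul_mem_right n h2))
  exact ⟨x, by linear_combination -hx⟩

end Henselian

theorem isUnit_intCast_padicInt_iff_isCoprime {p : ℕ} [Fact p.Prime] {k : ℤ} :
    IsUnit (k : ℤ_[p]) ↔ IsCoprime k p :=
  PadicInt.isUnit_iff.trans PadicInt.norm_intCast_eq_one_iff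

theorem two_adic_universality_of_odd
    (m : ℤ) (hm : 3 ≤ m) (hodd : Odd m) (n : ℤ_[2]) :
    ∃ x : ℤ_[2], 2 * n = ((m : ℤ_[2]) - 2) * x ^ 2 - ((m : ℤ_[2]) - 4) * x :=
  two_adic_universality_of_odd_general (I := IsLocalRing.maximalIdeal ℤ_[2]) PadicInt.p_nonunit
    (isUnit_intCast_padicInt_iff_isCoprime.mpr (Int.isCoprime_two_right.mpr hodd)) n
end

section
/- Let m ≥ 6 be an integer with m ≡ 2 (mod 4). Then for every prime p and every natural number n, there exist x, y, z in the ring ℤ_p of p-adic integers such that ((m−2)x + (m−4)/2)² + ((m−2)y + (m−4)/2)² + ((m−2)z + (m−4)/2)² = 2(m−2)n + 3((m−4)/2)². In other words, every integer 2(m−2)n + 3((m−4)/2)² is represented locally at every prime by the lattice coset associated to P_m. -/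
/-!
Put `m = 2h + 2`, so that `p_m(x) = h x² - (h - 1) x`, and work in a Henselian local ring with
finite residue field. If `h` is not a unit, then modulo the maximal ideal `p_m(x) ≡ x`, so by
Hensel's lemma `p_m` alone already represents everything. If `h` and `2` are units, completing the
square reduces the claim to representing elements by `u² + v² + w²`: over the residue field
`a - 1 = v² + w²` is solvable, and `a - v² - w² ≡ 1` is a square by Hensel's lemma. When `m ≡ 2`
modulo `4`, `h` is even, so one of the two cases applies at every prime.
-/

open IsLocalRing Polynomial

/-- The generalized `m`-gonal number `p_m(x) = ((m - 2) x² - (m - 4) x) / 2` with `m = 2 h + 2`;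
the parameter `h` avoids the division by `2`, so that it makes sense in any commutative ring. -/
def generalizedPolygonal {R : Type*} [CommRing R] (h x : R) : R :=
  h * x ^ 2 - (h - 1) * x

theorem generalizedPolygonal_zero_right {R : Type*} [CommRing R] (h : R) :
    generalizedPolygonal h 0 = 0 := by
  simp [generalizedPolygonal]

theorem sq_eq_four_mul_generalizedPolygonal_neg_add {R : Type*} [CommRing R] (h x : R) :
    (2 * h * x + (h - 1)) ^ 2 = 4 * h * generalizedPolygonal h (-x) + (h - 1) ^ 2 := by
  unfold generalizedPolygonal
  ring

theorem exists_sq_add_sq_eq_of_finite {F : Type*} [Field F] [Finite F] (a : F) :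
    ∃ x y : F, x ^ 2 + y ^ 2 = a := by
  have := Fintype.ofFinite F
  by_cases hF : ringChar F = 2
  · obtain ⟨x, rfl⟩ := FiniteField.isSquare_of_char_two hF a
    exact ⟨x, 0, by ring⟩
  · obtain ⟨x, y, hxy⟩ := FiniteField.exists_root_sum_quadratic (f := X ^ 2) (g := X ^ 2 - C a)
      (degree_X_pow 2) (degree_X_pow_sub_C two_pos a) (FiniteField.odd_card_of_char_ne_two hF)
    refine ⟨x, y, ?_⟩
    simp only [eval_pow, eval_X, eval_sub, eval_C] at hxy
    linear_combination hxy

theorem henselianLocalRing_of_isAdicComplete (R : Type*) [CommRing R] [IsLocalRing R]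
    [IsAdicComplete (maximalIdeal R) R] : HenselianLocalRing R where
  is_henselian f hf a hroot hsimple :=
    HenselianRing.is_henselian f hf a hroot (hsimple.map (Ideal.Quotient.mk (maximalIdeal R)))

section Henselian

variable {R : Type*} [CommRing R] [HenselianLocalRing R]

theorem exists_quadratic_root_of_mem_maximalIdeal {b c a : R}
    (hroot : a ^ 2 + b * a + c ∈ maximalIdeal R) (hsimple : IsUnit (2 * a + b)) :
    ∃ x : R, x ^ 2 + b * x + c = 0 ∧ x - a ∈ maximalIdeal R := by
  obtain ⟨x, hx, hxa⟩ := HenselianLocalRing.is_henselian (X ^ 2 + C b * X + C c)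
    (by monicity!) a (by simpa using hroot) (by simpa [one_add_one_eq_two] using hsimple)
  exact ⟨x, by simpa using hx, hxa⟩

theorem isSquare_of_sub_one_mem_maximalIdeal (h2 : IsUnit (2 : R)) {a : R}
    (ha : a - 1 ∈ maximalIdeal R) : IsSquare a := by
  obtain ⟨x, hx, -⟩ := exists_quadratic_root_of_mem_maximalIdeal (b := 0) (c := -a) (a := 1)
    (by simpa [← sub_eq_add_neg] using neg_mem ha) (by simpa using h2)
  exact ⟨x, by linear_combination -hx⟩

theorem exists_sum_three_sq_eq [Finite (ResidueField R)] (h2 : IsUnit (2 : R)) (a : R) :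
    ∃ x y z : R, x ^ 2 + y ^ 2 + z ^ 2 = a := by
  obtain ⟨y', z', hyz⟩ := exists_sq_add_sq_eq_of_finite (residue R (a - 1))
  obtain ⟨y, rfl⟩ := residue_surjective y'
  obtain ⟨z, rfl⟩ := residue_surjective z'
  have hmem : a - y ^ 2 - z ^ 2 - 1 ∈ maximalIdeal R := by
    rw [← residue_eq_zero_iff]
    simp only [map_sub, map_pow, map_one] at hyz ⊢
    linear_combination -hyz
  obtain ⟨x, hx⟩ := isSquare_of_sub_one_mem_maximalIdeal h2 hmem
  exact ⟨x, y, z, by linear_combination -hx⟩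

theorem generalizedPolygonal_surjective_of_mem_maximalIdeal {h : R} (hh : h ∈ maximalIdeal R) :
    Function.Surjective (generalizedPolygonal h) := by
  intro n
  -- Hensel's lemma needs a monic polynomial, so substitute `x = n / y` with `y ≡ 1`.
  obtain ⟨y, hy, hy1⟩ := exists_quadratic_root_of_mem_maximalIdeal
    (b := h - 1) (c := -(h * n)) (a := 1)
    (by convert Ideal.mul_mem_right (1 - n) _ hh using 1; ring)
    (by convert isUnit_one_sub_self_of_mem_nonunits (-h) (neg_mem (S := Ideal R) hh) using 1; ring)
  have hyu : IsUnit y := by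
    simpa using isUnit_one_sub_self_of_mem_nonunits (-(y - 1)) (neg_mem (S := Ideal R) hy1)
  obtain ⟨w, hw⟩ := hyu.exists_right_inv
  refine ⟨n * w, ?_⟩
  unfold generalizedPolygonal
  linear_combination -n * w ^ 2 * hy + (n * (1 + y * w) + n * (h - 1) * w) * hw

theorem exists_sum_three_generalizedPolygonal_eq_of_isUnit [Finite (ResidueField R)]
    (h2 : IsUnit (2 : R)) {h : R} (hh : IsUnit h) (n : R) :
    ∃ x y z : R,
      generalizedPolygonal h x + generalizedPolygonal h y + generalizedPolygonal h z = n := by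
  obtain ⟨u, v, w, huvw⟩ := exists_sum_three_sq_eq h2 (4 * h * n + 3 * (h - 1) ^ 2)
  have surj (t : R) : ∃ x, 2 * h * x + (h - 1) = t :=
    ((h2.mul hh).dvd (a := t - (h - 1))).imp fun x hx ↦ by linear_combination -hx
  obtain ⟨x, rfl⟩ := surj u
  obtain ⟨y, rfl⟩ := surj v
  obtain ⟨z, rfl⟩ := surj w
  have h4 : IsUnit (4 * h) := by convert h2.mul (h2.mul hh) using 1; ring
  refine ⟨-x, -y, -z, h4.mul_left_cancel ?_⟩
  simp only [sq_eq_four_mul_generalizedPolygonal_neg_add] at huvw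
  linear_combination huvw

theorem exists_sum_three_generalizedPolygonal_eq [Finite (ResidueField R)] {h : R}
    (h2 : IsUnit h → IsUnit (2 : R)) (n : R) :
    ∃ x y z : R,
      generalizedPolygonal h x + generalizedPolygonal h y + generalizedPolygonal h z = n := by
  by_cases hh : IsUnit h
  · exact exists_sum_three_generalizedPolygonal_eq_of_isUnit (h2 hh) hh n
  · obtain ⟨x, hx⟩ :=
      generalizedPolygonal_surjective_of_mem_maximalIdeal ((mem_maximalIdeal h).mpr hh) n
    exact ⟨x, 0, 0, by simp only [hx, generalizedPolygonal_zero_right, add_zero]⟩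

theorem local_representation_even_case_general [Finite (ResidueField R)] {h : R}
    (h2 : IsUnit h → IsUnit (2 : R)) (n : R) :
    ∃ x y z : R,
      (2 * h * x + (h - 1)) ^ 2 + (2 * h * y + (h - 1)) ^ 2 + (2 * h * z + (h - 1)) ^ 2 =
        4 * h * n + 3 * (h - 1) ^ 2 := by
  obtain ⟨x, y, z, hxyz⟩ := exists_sum_three_generalizedPolygonal_eq h2 n
  refine ⟨-x, -y, -z, ?_⟩
  simp only [sq_eq_four_mul_generalizedPolygonal_neg_add, neg_neg]
  linear_combination 4 * h * hxyz

end Henselian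

theorem local_representation_even_case
    (m : ℤ) (hm : 6 ≤ m) (h4 : m % 4 = 2) :
    ∀ (p : ℕ) [Fact p.Prime] (n : ℕ), ∃ x y z : ℤ_[p],
      (((m - 2 : ℤ) : ℤ_[p]) * x + (((m - 4) / 2 : ℤ) : ℤ_[p])) ^ 2 +
      (((m - 2 : ℤ) : ℤ_[p]) * y + (((m - 4) / 2 : ℤ) : ℤ_[p])) ^ 2 +
      (((m - 2 : ℤ) : ℤ_[p]) * z + (((m - 4) / 2 : ℤ) : ℤ_[p])) ^ 2 =
        ((2 * (m - 2) * (n : ℤ) + 3 * ((m - 4) / 2) ^ 2 : ℤ) : ℤ_[p]) := by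
  intro p _ n
  obtain ⟨k, hm2, hm4⟩ : ∃ k, m - 2 = 2 * (2 * k) ∧ (m - 4) / 2 = 2 * k - 1 :=
    ⟨m / 4, by omega, by omega⟩
  have : HenselianLocalRing ℤ_[p] := henselianLocalRing_of_isAdicComplete ℤ_[p]
  have : Finite (ResidueField ℤ_[p]) :=
    Finite.of_equiv _ (PadicInt.residueField (p := p)).symm.toEquiv
  obtain ⟨x, y, z, hxyz⟩ := local_representation_even_case_general (R := ℤ_[p]) (h := 2 * k)
    isUnit_of_mul_isUnit_left n
  refine ⟨x, y, z, ?_⟩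
  rw [hm2, hm4]
  push_cast
  linear_combination hxyz
end

section
/- Let m ≥ 3 be an odd integer. Then for every prime p and every natural number n, there exist x, y, z in the ring ℤ_p of p-adic integers such that (2(m−2)x + (m−4))² + (2(m−2)y + (m−4))² + (2(m−2)z + (m−4))² = 8(m−2)n + 3(m−4)². In other words, every integer 8(m−2)n + 3(m−4)² is represented locally at every prime by the lattice coset associated to P_m. -/
/-!
Work over a Henselian local ring `R` with finite residue field in which `2` and `m` are coprime,
and put `a = m - 2`, `c = m - 4`. Then `2 * a` and `c` are coprime, so one of them is a unit.

If `2 * a` is a unit, the coset `2 * a * R + c` is all of `R`, and every `N` is a sum of three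
squares: `N - 1` is a sum of two squares modulo the maximal ideal, so `N` minus these two squares
is congruent to `1` and therefore a square.

If `2 * a` is not a unit, then `c` is one and a single polygonal number suffices: modulo the maximal
ideal `c` is a simple root of `y ^ 2 - c * y - 2 * a * n`, and if `y` is a root of this polynomial
lifting it, then `x = 2 * n / y` solves `a * x ^ 2 + c * x = 2 * n`.
-/

open IsLocalRing Polynomial

theorem exists_sq_add_sq_eq_of_finite_field {k : Type*} [Field k] [Finite k] (x : k) :
    ∃ a b : k, a ^ 2 + b ^ 2 = x := by
  have := Fintype.ofFinite k
  by_cases hk : ringChar k = 2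
  · obtain ⟨a, rfl⟩ := FiniteField.isSquare_of_char_two hk x
    exact ⟨a, 0, by ring⟩
  · obtain ⟨a, b, hab⟩ := FiniteField.exists_root_sum_quadratic (degree_X_pow 2)
      (degree_X_pow_sub_C two_pos x) (FiniteField.odd_card_of_char_ne_two hk)
    refine ⟨a, b, ?_⟩
    simp only [eval_sub, eval_pow, eval_X, eval_C] at hab
    linear_combination hab

theorem henselianLocalRing_of_henselianRing (R : Type*) [CommRing R] [IsLocalRing R]
    [HenselianRing R (maximalIdeal R)] : HenselianLocalRing R where
  is_henselian f hf a₀ h₀ h₁ := HenselianRing.is_henselian f hf a₀ h₀ (h₁.map _)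

section HenselianLocalRing

variable {R : Type*} [CommRing R] [HenselianLocalRing R]

theorem exists_monic_quadratic_root {b c r : R} (hr : r ^ 2 + b * r + c ∈ maximalIdeal R)
    (hd : IsUnit (2 * r + b)) :
    ∃ x, x ^ 2 + b * x + c = 0 ∧ x - r ∈ maximalIdeal R := by
  have monic : (X ^ 2 + C b * X + C c).Monic := by monicity!
  obtain ⟨x, hx, hxr⟩ := HenselianLocalRing.is_henselian (X ^ 2 + C b * X + C c) monic r
    (by simpa using hr) (by simpa [one_add_one_eq_two] using hd)
  exact ⟨x, by simpa using hx, hxr⟩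

theorem exists_quadratic_root_of_isUnit {a b c : R} (hb : IsUnit b)
    (hac : a * c ∈ maximalIdeal R) : ∃ x, a * x ^ 2 + b * x + c = 0 := by
  -- Only monic polynomials may be lifted; `x = -c / y` turns the equation into a monic one for `y`.
  obtain ⟨y, hy, hyb⟩ : ∃ y, y ^ 2 + -b * y + a * c = 0 ∧ y - b ∈ maximalIdeal R := by
    apply exists_monic_quadratic_root
    · convert hac using 1
      ring
    · convert hb using 1
      ring
  have y_isUnit : IsUnit y := by
    contrapose! hb
    simpa using sub_mem ((mem_maximalIdeal y).mpr hb) hyb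
  obtain ⟨i, hi⟩ := y_isUnit.exists_right_inv
  refine ⟨-c * i, ?_⟩
  linear_combination c * i ^ 2 * hy - c * (1 + y * i - b * i) * hi

theorem isSquare_of_sub_sq_mem_maximalIdeal (h2 : IsUnit (2 : R)) {r u : R} (hr : IsUnit r)
    (hu : u - r ^ 2 ∈ maximalIdeal R) : IsSquare u := by
  obtain ⟨x, hx, -⟩ : ∃ x, x ^ 2 + 0 * x + -u = 0 ∧ x - r ∈ maximalIdeal R := by
    apply exists_monic_quadratic_root
    · convert neg_mem hu using 1
      ring
    · simpa using h2.mul hr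
  exact ⟨x, by linear_combination -hx⟩

theorem exists_sum_three_sq_eq_of_isUnit_two [Finite (ResidueField R)] (h2 : IsUnit (2 : R))
    (N : R) : ∃ x y z : R, x ^ 2 + y ^ 2 + z ^ 2 = N := by
  obtain ⟨α, β, hαβ⟩ := exists_sq_add_sq_eq_of_finite_field (residue R (N - 1))
  obtain ⟨a, rfl⟩ := residue_surjective α
  obtain ⟨b, rfl⟩ := residue_surjective β
  have mem : N - a ^ 2 - b ^ 2 - 1 ^ 2 ∈ maximalIdeal R := by
    rw [← residue_eq_zero_iff]
    simp only [map_sub, map_pow, map_one] at hαβ ⊢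
    linear_combination -hαβ
  obtain ⟨d, hd⟩ := isSquare_of_sub_sq_mem_maximalIdeal h2 isUnit_one mem
  exact ⟨a, b, d, by linear_combination -hd⟩

theorem exists_sum_three_sq_coset_eq [Finite (ResidueField R)] (h2 : IsUnit (2 : R)) {u : R}
    (hu : IsUnit u) (v N : R) :
    ∃ x y z : R, (u * x + v) ^ 2 + (u * y + v) ^ 2 + (u * z + v) ^ 2 = N := by
  have surj (w : R) : ∃ x, u * x + v = w :=
    (hu.dvd (a := w - v)).imp fun x hx ↦ by rw [← hx, sub_add_cancel]
  obtain ⟨X, Y, Z, h⟩ := exists_sum_three_sq_eq_of_isUnit_two h2 N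
  obtain ⟨x, rfl⟩ := surj X
  obtain ⟨y, rfl⟩ := surj Y
  obtain ⟨z, rfl⟩ := surj Z
  exact ⟨x, y, z, h⟩

end HenselianLocalRing

theorem isUnit_or_isUnit_of_isCoprime {R : Type*} [CommSemiring R] [IsLocalRing R] {x y : R}
    (h : IsCoprime x y) : IsUnit x ∨ IsUnit y := by
  obtain ⟨s, t, hst⟩ := h
  exact (IsLocalRing.isUnit_or_isUnit_of_add_one hst).imp isUnit_of_mul_isUnit_right
    isUnit_of_mul_isUnit_right

theorem isCoprime_two_mul_sub_two_sub_four {R : Type*} [CommRing R] {m : R} (hm : IsCoprime 2 m) :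
    IsCoprime (2 * (m - 2)) (m - 4) := by
  have coprime : IsCoprime 2 (m - 4) := by
    convert hm.add_mul_left_right (-2) using 1
    ring
  refine coprime.mul_left ?_
  convert coprime.add_mul_right_left 1 using 1
  ring

theorem local_representation_odd_case_general {R : Type*} [CommRing R] [HenselianLocalRing R]
    [Finite (ResidueField R)] {m : R} (hm : IsCoprime 2 m) (n : R) :
    ∃ x y z : R,
      (2 * (m - 2) * x + (m - 4)) ^ 2 + (2 * (m - 2) * y + (m - 4)) ^ 2 +
        (2 * (m - 2) * z + (m - 4)) ^ 2 = 8 * (m - 2) * n + 3 * (m - 4) ^ 2 := by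
  by_cases hu : IsUnit (2 * (m - 2))
  · exact exists_sum_three_sq_coset_eq (isUnit_of_mul_isUnit_left hu) hu _ _
  · have hc : IsUnit (m - 4) :=
      (isUnit_or_isUnit_of_isCoprime (isCoprime_two_mul_sub_two_sub_four hm)).resolve_left hu
    have mem : (m - 2) * (-2 * n) ∈ maximalIdeal R := by
      convert Ideal.mul_mem_right (-n) _ ((mem_maximalIdeal _).mpr hu) using 1
      ring
    obtain ⟨x, hx⟩ := exists_quadratic_root_of_isUnit hc mem
    exact ⟨x, 0, 0, by linear_combination 4 * (m - 2) * hx⟩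

instance (p : ℕ) [Fact p.Prime] : HenselianLocalRing ℤ_[p] :=
  henselianLocalRing_of_henselianRing ℤ_[p]

instance (p : ℕ) [Fact p.Prime] : Finite (ResidueField ℤ_[p]) :=
  Finite.of_equiv (ZMod p) PadicInt.residueField.symm.toEquiv

theorem local_representation_odd_case
    (m : ℤ) (hm : 3 ≤ m) (hodd : Odd m) :
    ∀ (p : ℕ) [Fact p.Prime] (n : ℕ), ∃ x y z : ℤ_[p],
      (((2 * (m - 2) : ℤ) : ℤ_[p]) * x + ((m - 4 : ℤ) : ℤ_[p])) ^ 2 +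
      (((2 * (m - 2) : ℤ) : ℤ_[p]) * y + ((m - 4 : ℤ) : ℤ_[p])) ^ 2 +
      (((2 * (m - 2) : ℤ) : ℤ_[p]) * z + ((m - 4 : ℤ) : ℤ_[p])) ^ 2 =
        ((8 * (m - 2) * (n : ℤ) + 3 * (m - 4) ^ 2 : ℤ) : ℤ_[p]) := by
  intro p _ n
  have coprime : IsCoprime (2 : ℤ_[p]) m :=
    mod_cast (Int.isCoprime_two_left.mpr hodd).intCast (R := ℤ_[p])
  exact_mod_cast local_representation_odd_case_general coprime (n : ℤ_[p])
end

section
/- Let r ≥ 1 be an integer and set m = 12r + 2. Let ℓ be a prime with ℓ ≡ 1 (mod 12) if r is odd and ℓ ≡ 7 (mod 12) if r is even, and suppose n is a natural number satisfying 24rn + 3(6r−1)² = 3ℓ². Then there exist no integers x, y, z with P_m(x,y,z) = n. -/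
/-- The `x`-th generalized `m`-gonal number, `p_m(x) = ((m-2)x² - (m-4)x)/2`
(the division is exact). -/
def pm (m x : ℤ) : ℤ := ((m - 2) * x ^ 2 - (m - 4) * x) / 2

/-!
Completing the square turns `P_m(x, y, z) = n` into `X² + Y² + Z² = 3ℓ²` with
`X ≡ Y ≡ Z ≡ ℓ + 6 (mod 12)`. Put `X + Y + Z = 3s`. The differences of `X, Y, Z` are
multiples of `12`, so `ℓ² - s² = 32(u² + uv + v²)`, and the congruences modulo `4` split this as
`ℓ - s = 2a`, `ℓ + s = 16b`, `ab = u² + uv + v²`, `a + 8b = ℓ`. Modulo `3` they force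
`b ≡ 2`. A prime `p ≡ 2 (mod 3)` is inert in the Eisenstein integers, hence divides the norm `ab` to
an even power; it cannot divide both `a` and `b` without dividing `ℓ`, so it divides `b` to an even
power. Then `b ≢ 2 (mod 3)`, a contradiction.
-/

theorem mod_three_ne_two_of_even_factorization {n : ℕ}
    (h : ∀ p : ℕ, p.Prime → p % 3 = 2 → Even (n.factorization p)) : n % 3 ≠ 2 := by
  rcases eq_or_ne n 0 with rfl | hn
  · decide
  rw [← Nat.prod_factorization_pow_eq_self hn]
  refine Finset.prod_induction _ (· % 3 ≠ 2) (fun a b ha hb ↦ ?_) (by decide) fun p hp ↦ ?_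
  · have ha' : a % 3 = 0 ∨ a % 3 = 1 := by omega
    have hb' : b % 3 = 0 ∨ b % 3 = 1 := by omega
    rcases ha' with ha' | ha' <;> rcases hb' with hb' | hb' <;> simp [Nat.mul_mod, ha', hb']
  · have hp' : p % 3 = 0 ∨ p % 3 = 1 ∨ p % 3 = 2 := by omega
    rcases hp' with hp' | hp' | hp'
    · rcases n.factorization p with _ | k <;> simp [Nat.pow_mod, hp']
    · simp [Nat.pow_mod, hp']
    · obtain ⟨k, hk⟩ := (h p (Nat.prime_of_mem_primeFactors hp) hp').two_dvd
      simp [hk, pow_mul, Nat.pow_mod, hp']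

theorem right_eq_zero_of_sq_add_mul_add_sq_eq_zero {p : ℕ} [Fact p.Prime] (hp3 : p % 3 = 2)
    {a b : ZMod p} (h : a ^ 2 + a * b + b ^ 2 = 0) : b = 0 := by
  by_contra hb
  have hroot : (a / b) ^ 2 + a / b + 1 = 0 := by
    field_simp
    linear_combination h
  have hcube : (a / b) ^ 3 = 1 := by linear_combination (a / b - 1) * hroot
  have hne_one : a / b ≠ 1 := by
    intro hone
    have h3 : ((3 : ℕ) : ZMod p) = 0 := by
      rw [hone] at hroot
      push_cast
      linear_combination hroot
    rw [ZMod.natCast_eq_zero_iff, Nat.prime_dvd_prime_iff_eq Fact.out Nat.prime_three] at h3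
    omega
  have hdvd : 3 ∣ p - 1 := by
    rw [← orderOf_eq_prime hcube hne_one]
    exact ZMod.orderOf_dvd_card_sub_one fun h0 ↦ by simp [h0] at hcube
  omega

theorem dvd_of_dvd_sq_add_mul_add_sq {p : ℕ} (hp : p.Prime) (hp3 : p % 3 = 2) {u v : ℤ}
    (h : (p : ℤ) ∣ u ^ 2 + u * v + v ^ 2) : (p : ℤ) ∣ u ∧ (p : ℤ) ∣ v := by
  have := Fact.mk hp
  simp only [← ZMod.intCast_zmod_eq_zero_iff_dvd, Int.cast_add, Int.cast_mul, Int.cast_pow] at h ⊢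
  exact ⟨right_eq_zero_of_sq_add_mul_add_sq_eq_zero (a := (v : ZMod p)) hp3
      (by linear_combination h),
    right_eq_zero_of_sq_add_mul_add_sq_eq_zero hp3 h⟩

theorem even_factorization_of_eq_sq_add_mul_add_sq {p : ℕ} (hp : p.Prime) (hp3 : p % 3 = 2)
    {n : ℕ} {u v : ℤ} (h : (n : ℤ) = u ^ 2 + u * v + v ^ 2) : Even (n.factorization p) := by
  induction n using Nat.strong_induction_on generalizing u v with
  | _ n ih =>
    by_cases hpn : p ∣ n
    swap
    · simp [Nat.factorization_eq_zero_of_not_dvd hpn]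
    rcases eq_or_ne n 0 with rfl | hn
    · simp
    obtain ⟨⟨u', rfl⟩, v', rfl⟩ := dvd_of_dvd_sq_add_mul_add_sq hp hp3
      (h ▸ Int.natCast_dvd_natCast.mpr hpn)
    have hdvd : p ^ 2 ∣ n := by
      zify
      exact ⟨u' ^ 2 + u' * v' + v' ^ 2, by linear_combination h⟩
    obtain ⟨k, rfl⟩ := hdvd
    have hk : k ≠ 0 := right_ne_zero_of_mul hn
    have hk_norm : (k : ℤ) = u' ^ 2 + u' * v' + v' ^ 2 := by
      refine mul_left_cancel₀ (pow_ne_zero 2 (Nat.cast_ne_zero.mpr hp.ne_zero)) ?_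
      push_cast at h
      linear_combination h
    have hk_lt : k < p ^ 2 * k :=
      lt_mul_of_one_lt_left (Nat.pos_of_ne_zero hk) (Nat.one_lt_pow two_ne_zero hp.one_lt)
    rw [Nat.factorization_mul (pow_ne_zero 2 hp.ne_zero) hk]
    simpa [hp.factorization, Nat.even_add] using ih k hk_lt hk_norm

theorem mod_three_ne_two_of_mul_eq_sq_add_mul_add_sq {a b : ℕ} {u v : ℤ}
    (hab : ∀ p : ℕ, p.Prime → p % 3 = 2 → p ∣ a → ¬ p ∣ b)
    (h : (a : ℤ) * b = u ^ 2 + u * v + v ^ 2) : b % 3 ≠ 2 := by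
  refine mod_three_ne_two_of_even_factorization fun p hp hp3 ↦ ?_
  by_cases hpb : p ∣ b
  swap
  · simp [Nat.factorization_eq_zero_of_not_dvd hpb]
  rcases eq_or_ne b 0 with rfl | hb
  · simp
  have hpa : ¬ p ∣ a := fun hpa ↦ hab p hp hp3 hpa hpb
  have ha : a ≠ 0 := by
    rintro rfl
    exact hpa (dvd_zero p)
  have heven : Even ((a * b).factorization p) :=
    even_factorization_of_eq_sq_add_mul_add_sq hp hp3 (by exact_mod_cast h)
  simpa [Nat.factorization_mul ha hb, Nat.factorization_eq_zero_of_not_dvd hpa] using heven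

theorem exists_mul_eq_sq_add_mul_add_sq_of_sum_three_sq {L X Y Z : ℤ} (hL : Odd L)
    (hX : X ≡ L + 6 [ZMOD 12]) (hY : Y ≡ L + 6 [ZMOD 12]) (hZ : Z ≡ L + 6 [ZMOD 12])
    (h : X ^ 2 + Y ^ 2 + Z ^ 2 = 3 * L ^ 2) :
    ∃ a b u v : ℤ, a + 8 * b = L ∧ a * b = u ^ 2 + u * v + v ^ 2 ∧ a ≡ u - v [ZMOD 3] := by
  obtain ⟨u, hu⟩ := (hY.trans hX.symm).dvd
  obtain ⟨v, hv⟩ := (hZ.trans hY.symm).dvd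
  obtain ⟨s, hs⟩ : ∃ s, X + Y + Z = 3 * s := ⟨X - 8 * u - 4 * v, by omega⟩
  have hfactor : (L - s) * (L + s) = 32 * (u ^ 2 + u * v + v ^ 2) := by
    have hsq : 3 * (X ^ 2 + Y ^ 2 + Z ^ 2) =
        (X + Y + Z) ^ 2 + 2 * ((X - Y) ^ 2 + (X - Y) * (Y - Z) + (Y - Z) ^ 2) := by ring
    rw [h, hs, hu, hv] at hsq
    linarith
  obtain ⟨a, ha, ha_odd⟩ : ∃ a, L - s = 2 * a ∧ Odd a := by
    obtain ⟨l, rfl⟩ := hL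
    obtain ⟨t, ht⟩ := hX.dvd
    exact ⟨4 * u + 2 * v + 6 * t - 3, by omega, 2 * u + v + 3 * t - 2, by ring⟩
  have hdvd : (16 : ℤ) ∣ L + s := by
    have hcop : IsCoprime ((2 : ℤ) ^ 4) a :=
      (Int.isCoprime_two_left.mpr ha_odd).pow_left
    refine hcop.dvd_of_dvd_mul_left ⟨u ^ 2 + u * v + v ^ 2, ?_⟩
    rw [ha] at hfactor
    linarith
  obtain ⟨b, hb⟩ := hdvd
  refine ⟨a, b, u, v, by omega, ?_, ?_⟩
  · rw [ha, hb] at hfactor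
    linarith
  · obtain ⟨t, ht⟩ := hX.dvd
    exact Int.modEq_iff_dvd.mpr (by omega)

theorem sum_three_sq_ne_three_mul_sq {L : ℕ} (hL : ∀ p : ℕ, p.Prime → p % 3 = 2 → ¬ p ∣ L)
    (hL3 : L % 3 = 1) {X Y Z : ℤ} (hX : X ≡ L + 6 [ZMOD 12]) (hY : Y ≡ L + 6 [ZMOD 12])
    (hZ : Z ≡ L + 6 [ZMOD 12]) : X ^ 2 + Y ^ 2 + Z ^ 2 ≠ 3 * (L : ℤ) ^ 2 := by
  intro h
  have hL_odd : Odd (L : ℤ) := by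
    exact_mod_cast Nat.not_even_iff_odd.mp fun he ↦ hL 2 Nat.prime_two rfl he.two_dvd
  obtain ⟨a, b, u, v, hsum, hmul, ha3⟩ :=
    exists_mul_eq_sq_add_mul_add_sq_of_sum_three_sq hL_odd hX hY hZ h
  have hab : 0 ≤ a * b := by nlinarith [sq_nonneg (u + v), sq_nonneg u, sq_nonneg v]
  obtain ⟨ha, hb⟩ : 0 ≤ a ∧ 0 ≤ b := by
    rcases mul_nonneg_iff.mp hab with hnonneg | hnonpos
    · exact hnonneg
    · omega
  lift a to ℕ using ha
  lift b to ℕ using hb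
  have hb_ne : b % 3 ≠ 2 := by
    refine mod_three_ne_two_of_mul_eq_sq_add_mul_add_sq (fun p hp hp3 hpa hpb ↦ ?_) hmul
    have hL_eq : a + 8 * b = L := by exact_mod_cast hsum
    exact hL p hp hp3 (hL_eq ▸ dvd_add hpa (hpb.mul_left 8))
  -- Modulo `3`, `ab = u² + uv + v² ≡ (u - v)² ≡ a²`, while `a - b ≡ a + 8b = L ≡ 1`.
  have hmul3 : (3 : ℤ) ∣ a * (b - a) := by
    obtain ⟨t, ht⟩ := ha3.dvd
    exact ⟨u * v + t * (a + (u - v)), by linear_combination hmul + (a + (u - v)) * ht⟩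
  rcases Int.prime_three.dvd_or_dvd hmul3 with h3 | h3 <;> omega

theorem pm_complete_square (m x : ℤ) :
    8 * (m - 2) * pm m x + (m - 4) ^ 2 = (2 * (m - 2) * x - (m - 4)) ^ 2 := by
  have heven : 2 ∣ (m - 2) * x ^ 2 - (m - 4) * x := by
    obtain ⟨k, hk⟩ := (Int.even_mul_pred_self x).two_dvd
    exact ⟨m * k - x ^ 2 + 2 * x, by linear_combination m * hk⟩
  have hpm : 2 * pm m x = (m - 2) * x ^ 2 - (m - 4) * x := Int.mul_ediv_cancel' heven
  linear_combination 4 * (m - 2) * hpm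

theorem not_represented_of_three_ell_sq_general
    (r m : ℤ) (hm : m = 12 * r + 2)
    (ℓ : ℕ) (hℓ : ∀ p : ℕ, p.Prime → p % 3 = 2 → ¬ p ∣ ℓ)
    (hℓmod : (Odd r → (ℓ : ℤ) % 12 = 1) ∧ (Even r → (ℓ : ℤ) % 12 = 7))
    (n : ℤ) (hn : 24 * r * n + 3 * (6 * r - 1) ^ 2 = 3 * (ℓ : ℤ) ^ 2) :
    ¬ ∃ x y z : ℤ, pm m x + pm m y + pm m z = n := by
  rintro ⟨x, y, z, h⟩
  subst hm
  have hℓr : (ℓ : ℤ) ≡ 6 * r + 7 [ZMOD 12] := by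
    rcases Int.even_or_odd' r with ⟨k, rfl | rfl⟩
    · have := hℓmod.2 (even_two_mul k)
      grind [Int.ModEq]
    · have := hℓmod.1 (odd_two_mul_add_one k)
      grind [Int.ModEq]
  have hmod (t : ℤ) : 12 * (r * t) - (6 * r - 1) ≡ ℓ + 6 [ZMOD 12] := by
    grind [Int.ModEq]
  have hℓ3 : ℓ % 3 = 1 := by grind [Int.ModEq]
  refine sum_three_sq_ne_three_mul_sq hℓ hℓ3 (hmod x) (hmod y) (hmod z) ?_
  have hx := pm_complete_square (12 * r + 2) x
  have hy := pm_complete_square (12 * r + 2) y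
  have hz := pm_complete_square (12 * r + 2) z
  subst h
  linarith

theorem not_represented_of_three_ell_sq
    (r : ℤ) (hr : 1 ≤ r) (m : ℤ) (hm : m = 12 * r + 2)
    (ℓ : ℕ) (hℓ : ℓ.Prime)
    (hℓmod : (Odd r → (ℓ : ℤ) % 12 = 1) ∧ (Even r → (ℓ : ℤ) % 12 = 7))
    (n : ℕ) (hn : 24 * r * (n : ℤ) + 3 * (6 * r - 1) ^ 2 = 3 * (ℓ : ℤ) ^ 2) :
    ¬ ∃ x y z : ℤ, pm m x + pm m y + pm m z = (n : ℤ) := by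
  have hℓ3 : ℓ % 3 = 1 := by grind [Int.even_or_odd r]
  exact not_represented_of_three_ell_sq_general r m hm ℓ
    (fun p hp hp3 hpℓ ↦ by grind [Nat.prime_dvd_prime_iff_eq hp hℓ]) hℓmod n hn
end
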